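/- Assume m¹ is reversible and ergodic with respect to q. If F ⊂ E* is (m²,Q)-ergodic, then T₀(F) and T₁(F) are also (m²,Q)-ergodic. -/

import Mathlib

open MeasureTheory ProbabilityTheory Set Pointwise
open scoped ENNReal

noncomputable section

/-- The increasing affine map from `(-1,1)` onto the chord `E_u`. -/
def ellMap (γ u x : ℝ) : ℝ := -u * Real.cos γ + x * Real.sqrt (1 - u ^ 2 * Real.sin γ ^ 2)

/-- The inverse of `ellMap γ u`. -/
def ellInv (γ u y : ℝ) : ℝ := (y + u * Real.cos γ) / Real.sqrt (1 - u ^ 2 * Real.sin γ ^ 2)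

/-- The open elliptical region `E`. -/
def Eset (γ : ℝ) : Set (ℝ × ℝ) :=
  {p | p.1 ^ 2 + 2 * Real.cos γ * p.1 * p.2 + p.2 ^ 2 < 1}

/-- The state space `E* = E × {−1,1}`, realized inside `ℝ × ℝ × ℝ`. -/
def EstarSet (γ : ℝ) : Set (ℝ × ℝ × ℝ) :=
  {w | (w.1, w.2.1) ∈ Eset γ ∧ (w.2.2 = 1 ∨ w.2.2 = -1)}

/-- Uniform probability measure on `(-1,1)`. -/
def m1 : Measure ℝ := (2 : ℝ≥0∞)⁻¹ • volume.restrict (Ioo (-1 : ℝ) 1)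

/-- The probability measure `m²` on `E*`: normalized Lebesgue measure on `E` times
uniform measure on `{−1,1}`. -/
def m2 (γ : ℝ) : Measure (ℝ × ℝ × ℝ) :=
  ((((volume (Eset γ))⁻¹ • volume.restrict (Eset γ)).prod
      ((2 : ℝ≥0∞)⁻¹ • (Measure.dirac (1 : ℝ) + Measure.dirac (-1 : ℝ)))).map
    fun p => (p.1.1, p.1.2, p.2))

/-- `q` is a Markov kernel on `(-1,1)`. -/
def IsMarkovOnInterval (q : Kernel ℝ ℝ) : Prop :=
  IsMarkovKernel q ∧ ∀ x ∈ Ioo (-1 : ℝ) 1, q x (Ioo (-1 : ℝ) 1) = 1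

/-- The kernel `Q` of the alternating random walk, as a measure-valued function on the
state space. -/
def Qfun (γ : ℝ) (q : Kernel ℝ ℝ) : ℝ × ℝ × ℝ → Measure (ℝ × ℝ × ℝ) := fun w =>
  if w.2.2 = -1 then
    Measure.map (fun x => (ellMap γ w.2.1 x, w.2.1, (1 : ℝ))) (q (-ellInv γ w.2.1 w.1))
  else
    Measure.map (fun x => (w.1, ellMap γ w.1 x, (-1 : ℝ))) (q (-ellInv γ w.1 w.2.1))

/-- The kernel `Q†`. -/
def Qdag (γ : ℝ) (q : Kernel ℝ ℝ) : ℝ × ℝ × ℝ → Measure (ℝ × ℝ × ℝ) := fun w =>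
  if w.2.2 = 1 then
    Measure.map (fun x => (ellMap γ w.2.1 x, w.2.1, (-1 : ℝ)))
      ((q (ellInv γ w.2.1 w.1)).map (fun y => -y))
  else
    Measure.map (fun x => (w.1, ellMap γ w.1 x, (1 : ℝ)))
      ((q (ellInv γ w.1 w.2.1)).map (fun y => -y))

/-- Bounded continuous real-valued functions on a subset `S`. -/
def BddCtsOn {X : Type*} [TopologicalSpace X] (S : Set X) (f : X → ℝ) : Prop :=
  ContinuousOn f S ∧ ∃ C, ∀ x ∈ S, |f x| ≤ C

/-- `m¹` is a reversible measure for `q`. -/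
def Reversible1 (q : Kernel ℝ ℝ) : Prop :=
  ∀ j k : ℝ → ℝ, BddCtsOn (Ioo (-1 : ℝ) 1) j → BddCtsOn (Ioo (-1 : ℝ) 1) k →
    ∫ x, k x * ∫ y, j y ∂(q x) ∂m1 = ∫ x, j x * ∫ y, k y ∂(q x) ∂m1

/-- The `†`-operation on measure-valued functions on `(-1,1)`: `p†(x,A) := p(−x,−A)`. -/
def dag (p : ℝ → Measure ℝ) : ℝ → Measure ℝ := fun x => (p (-x)).map (fun y => -y)

/-- `m¹` is a `†`-reversible measure for `p`. -/
def DagReversible1 (p : ℝ → Measure ℝ) : Prop :=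
  ∀ j k : ℝ → ℝ, BddCtsOn (Ioo (-1 : ℝ) 1) j → BddCtsOn (Ioo (-1 : ℝ) 1) k →
    ∫ x, k x * ∫ y, j y ∂(p x) ∂m1 = ∫ x, j x * ∫ y, k y ∂(dag p x) ∂m1

/-- `m²` is a `†`-reversible measure for `Q`. -/
def DagReversible2 (γ : ℝ) (q : Kernel ℝ ℝ) : Prop :=
  ∀ f g : ℝ × ℝ × ℝ → ℝ, BddCtsOn (EstarSet γ) f → BddCtsOn (EstarSet γ) g →
    ∫ w, g w * ∫ w', f w' ∂(Qfun γ q w) ∂(m2 γ) =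
      ∫ w, f w * ∫ w', g w' ∂(Qdag γ q w) ∂(m2 γ)

/-- `μ` is an invariant measure for the transition function `p`. -/
def KInvariantMeasure {S : Type*} [MeasurableSpace S] (μ : Measure S) (p : S → Measure S) :
    Prop :=
  ∀ A : Set S, MeasurableSet A → ∫⁻ x, p x A ∂μ = μ A

/-- The set `A` is `(μ,p)`-invariant. -/
def KInvariantSet {S : Type*} [MeasurableSpace S] (μ : Measure S) (p : S → Measure S)
    (A : Set S) : Prop :=
  ∀ᵐ x ∂μ, x ∈ A → p x A = 1

/-- `μ` is an ergodic measure for the transition function `p`. -/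
def KErgodicMeasure {S : Type*} [MeasurableSpace S] (μ : Measure S) (p : S → Measure S) :
    Prop :=
  KInvariantMeasure μ p ∧
    ∀ A : Set S, MeasurableSet A → KInvariantSet μ p A → μ A = 0 ∨ μ A = 1

/-- The set `A` is `(μ,p)`-ergodic. -/
def KErgodicSet {S : Type*} [MeasurableSpace S] (μ : Measure S) (p : S → Measure S)
    (A : Set S) : Prop :=
  MeasurableSet A ∧ KInvariantSet μ p A ∧
    ∀ B : Set S, B ⊆ A → MeasurableSet B → KInvariantSet μ p B → μ B = 0 ∨ μ B = μ A

/-- `F⁺`: the slice of `F ⊆ E*` at `s = 1`. -/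
def Fplus (F : Set (ℝ × ℝ × ℝ)) : Set (ℝ × ℝ) := {p | (p.1, p.2, (1 : ℝ)) ∈ F}

/-- `F⁻`: the slice of `F ⊆ E*` at `s = −1`. -/
def Fminus (F : Set (ℝ × ℝ × ℝ)) : Set (ℝ × ℝ) := {p | (p.1, p.2, (-1 : ℝ)) ∈ F}

/-- `[G]^u ⊆ (−1,1)`. -/
def brU (γ : ℝ) (G : Set (ℝ × ℝ)) (u : ℝ) : Set ℝ :=
  {x | x ∈ Ioo (-1 : ℝ) 1 ∧ (u, ellMap γ u x) ∈ G}

/-- `[G]_v ⊆ (−1,1)`. -/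
def brV (γ : ℝ) (G : Set (ℝ × ℝ)) (v : ℝ) : Set ℝ :=
  {x | x ∈ Ioo (-1 : ℝ) 1 ∧ (ellMap γ v x, v) ∈ G}

/-- The map `T₀` on `E*`. -/
def T0 (γ : ℝ) (w : ℝ × ℝ × ℝ) : ℝ × ℝ × ℝ :=
  (-w.1 - 2 * w.2.1 * Real.cos γ, w.2.1, -w.2.2)

/-- The map `T₁` on `E*`. -/
def T1 (γ : ℝ) (w : ℝ × ℝ × ℝ) : ℝ × ℝ × ℝ :=
  (w.1, -w.2.1 - 2 * w.1 * Real.cos γ, -w.2.2)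

/-- The linear map `U_γ` taking `E` to the unit disk. -/
def Ugamma (γ : ℝ) (p : ℝ × ℝ) : ℝ × ℝ := (p.1 + p.2 * Real.cos γ, p.2 * Real.sin γ)

/-- `V(u,v,s) = s·|U_γ(u,v)|²`. -/
def Vfun (γ : ℝ) (w : ℝ × ℝ × ℝ) : ℝ :=
  w.2.2 * ((w.1 + w.2.1 * Real.cos γ) ^ 2 + (w.2.1 * Real.sin γ) ^ 2)

/-!
By ergodicity, the unordered pair of sets that `q` exchanges almost surely is unique, apart from
pairs of null sets and pairs of conull sets. Reversibility makes the slices `-[P]_v` and `[N]_v`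
of the two sheets of a `Q`-invariant set such a pair, so almost every slice of `P` is null, conull
or one of two fixed sets, and likewise for the slices in the other direction. In the coordinate of
a horizontal chord, membership in `P` can thus be read off the coordinates of the vertical chord,
which vary smoothly with the point. Because preimages of measurable sets vary continuously in
measure, a set `D` that is a slice of `P` for a non-null set of heights is almost surely constant
near each coordinate `c`, and so on all of `(-1, 1)`. The argument fails only at `c = 0` when
`cos γ = 0`, where `D` may also be one of the two halves of the interval. In all cases the two
sheets agree up to a null set, and reflecting a chord preserves the invariance.
-/

open Filter Topology symmDiff

section GeneralMeasure

variable {X Y Z ι : Type*} [MeasurableSpace X] {μ : Measure X}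

lemma tendsto_measure_symmDiff_preimage_of_map_le [IsFiniteMeasure μ]
    [TopologicalSpace Y] [TopologicalSpace.PseudoMetrizableSpace Y] [MeasurableSpace Y]
    [BorelSpace Y] {ν : Measure Y} [IsFiniteMeasure ν] {l : Filter ι} [l.IsCountablyGenerated]
    {f : ι → X → Y} {g : X → Y} (hf : ∀ i, Measurable (f i)) (hg : Measurable g)
    (hν : ∀ᶠ i in l, μ.map (f i) ≤ ν) (hlim : ∀ᵐ x ∂μ, Tendsto (f · x) l (𝓝 (g x)))
    {s : Set Y} (hs : MeasurableSet s) :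
    Tendsto (fun i => μ ((f i ⁻¹' s) ∆ (g ⁻¹' s))) l (𝓝 0) := by
  have exits_open (U : Set Y) (hU : IsOpen U) :
      Tendsto (fun i => μ (g ⁻¹' U ∩ f i ⁻¹' Uᶜ)) l (𝓝 0) := by
    rw [← measure_empty (μ := μ)]
    refine tendsto_measure_of_ae_tendsto_indicator_of_isFiniteMeasure l .empty
      (fun i => (hg hU.measurableSet).inter (hf i hU.measurableSet.compl)) ?_
    filter_upwards [hlim] with x hx
    by_cases hxU : g x ∈ U
    · filter_upwards [hx.eventually_mem (hU.mem_nhds hxU)] with i hi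
      simp [hi]
    · simp [hxU]
  -- Squeeze `s` between a closed `K` and an open `U` of nearly the same `ν`-measure.
  rw [ENNReal.tendsto_nhds_zero]
  intro ε hε
  have hδ : ε / 2 / 2 ≠ 0 := by simpa using hε.ne'
  obtain ⟨U, hsU, hU, -, hνU⟩ := hs.exists_isOpen_sdiff_lt (measure_ne_top ν s) hδ
  obtain ⟨K, hKs, hK, hνK⟩ := hs.exists_isClosed_sdiff_lt (measure_ne_top ν s) hδ
  filter_upwards [hν, ENNReal.tendsto_nhds_zero.1 (exits_open U hU) _ hδ.bot_lt,
    ENNReal.tendsto_nhds_zero.1 (exits_open Kᶜ hK.isOpen_compl) _ hδ.bot_lt] with i hi hiU hiK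
  have near_boundary {t : Set Y} (ht : MeasurableSet t) (hνt : ν t < ε / 2 / 2) :
      μ (f i ⁻¹' t) ≤ ε / 2 / 2 :=
    (Measure.map_apply (hf i) ht).symm.trans_le ((hi t).trans hνt.le)
  calc μ ((f i ⁻¹' s) ∆ (g ⁻¹' s))
      ≤ μ ((f i ⁻¹' (U \ s) ∪ f i ⁻¹' (s \ K)) ∪
          ((g ⁻¹' U ∩ f i ⁻¹' Uᶜ) ∪ (g ⁻¹' Kᶜ ∩ f i ⁻¹' Kᶜᶜ))) := by
        refine measure_mono fun x hx => ?_
        have := @hsU (g x)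
        have := @hKs (g x)
        simp only [mem_symmDiff, mem_preimage, mem_union, mem_inter_iff, Set.mem_sdiff,
          mem_compl_iff, not_not] at hx ⊢
        tauto
    _ ≤ (ε / 2 / 2 + ε / 2 / 2) + (ε / 2 / 2 + ε / 2 / 2) := by
        refine (measure_union_le _ _).trans (add_le_add ?_ ?_) <;>
          refine (measure_union_le _ _).trans (add_le_add ?_ ?_)
        exacts [near_boundary (hU.measurableSet.diff hs) hνU,
          near_boundary (hs.diff hK.measurableSet) hνK, hiU, hiK]
    _ = ε := by simp only [ENNReal.add_halves]

lemma tendsto_measure_symmDiff_preimage_prodMk {K : Set Z} (hK : K.Finite) {l : Filter ι}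
    {W : Type*} [MeasurableSpace Y] [MeasurableSpace W]
    {f : ι → X → Y} {f₀ : X → Y} {g : ι → X → W} {g₀ : X → W}
    (hf : ∀ s, MeasurableSet s → Tendsto (fun i => μ ((f i ⁻¹' s) ∆ (f₀ ⁻¹' s))) l (𝓝 0))
    (hg : ∀ s, MeasurableSet s → Tendsto (fun i => μ ((g i ⁻¹' s) ∆ (g₀ ⁻¹' s))) l (𝓝 0))
    {s : Z → Set Y} {t : Z → Set W} (hs : ∀ k ∈ K, MeasurableSet (s k))
    (ht : ∀ k ∈ K, MeasurableSet (t k)) :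
    Tendsto (fun i => μ (((fun x => (f i x, g i x)) ⁻¹' ⋃ k ∈ K, s k ×ˢ t k) ∆
      ((fun x => (f₀ x, g₀ x)) ⁻¹' ⋃ k ∈ K, s k ×ˢ t k))) l (𝓝 0) := by
  have bound (i : ι) : μ (((fun x => (f i x, g i x)) ⁻¹' ⋃ k ∈ K, s k ×ˢ t k) ∆
      ((fun x => (f₀ x, g₀ x)) ⁻¹' ⋃ k ∈ K, s k ×ˢ t k)) ≤
      ∑ k ∈ hK.toFinset, (μ ((f i ⁻¹' s k) ∆ (f₀ ⁻¹' s k)) +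
        μ ((g i ⁻¹' t k) ∆ (g₀ ⁻¹' t k))) := by
    calc _ ≤ μ (⋃ k ∈ hK.toFinset, ((f i ⁻¹' s k) ∆ (f₀ ⁻¹' s k) ∪
            (g i ⁻¹' t k) ∆ (g₀ ⁻¹' t k))) := by
          refine measure_mono fun x => ?_
          simp only [mem_symmDiff, mem_preimage, mem_iUnion, mem_prod, mem_union,
            Finite.mem_toFinset]
          grind
      _ ≤ _ := (measure_biUnion_finset_le _ _).trans
          (Finset.sum_le_sum fun k _ => measure_union_le _ _)
  refine tendsto_of_tendsto_of_tendsto_of_le_of_le tendsto_const_nhds ?_ (fun _ => zero_le) bound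
  rw [← Finset.sum_const_zero (ι := Z) (s := hK.toFinset)]
  refine tendsto_finsetSum _ fun k hk => ?_
  rw [← add_zero 0]
  exact (hf _ (hs k (hK.mem_toFinset.1 hk))).add (hg _ (ht k (hK.mem_toFinset.1 hk)))

lemma tendsto_measure_of_tendsto_measure_symmDiff [IsFiniteMeasure μ] {l : Filter ι}
    {s : ι → Set X} {t : Set X} (hs : ∀ i, MeasurableSet (s i)) (ht : MeasurableSet t)
    (h : Tendsto (fun i => μ (s i ∆ t)) l (𝓝 0)) : Tendsto (fun i => μ (s i)) l (𝓝 (μ t)) := by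
  let S (i : ι) : MeasuredSets μ := ⟨s i, hs i⟩
  let T : MeasuredSets μ := ⟨t, ht⟩
  have hST : Tendsto S l (𝓝 T) := tendsto_iff_edist_tendsto_0.2 h
  exact (MeasuredSets.continuous_measure.tendsto T).comp hST

lemma eventually_nhds_inf_ae_iff [TopologicalSpace X] {c : X} {p : X → Prop} :
    (∀ᶠ x in 𝓝 c ⊓ ae μ, p x) ↔ ∃ U, IsOpen U ∧ c ∈ U ∧ ∀ᵐ x ∂μ, x ∈ U → p x := by
  rw [((nhds_basis_opens c).inf (ae μ).basis_sets).eventually_iff]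
  constructor
  · rintro ⟨⟨U, A⟩, ⟨⟨hcU, hU⟩, hA⟩, h⟩
    refine ⟨U, hU, hcU, ?_⟩
    filter_upwards [hA] with x hxA hxU using h ⟨hxU, hxA⟩
  · rintro ⟨U, hU, hcU, h⟩
    exact ⟨(U, _), ⟨⟨hcU, hU⟩, h⟩, fun x hx => hx.2 hx.1⟩

lemma ae_mem_or_ae_notMem_of_isPreconnected [TopologicalSpace X] [SecondCountableTopology X]
    {s D : Set X} (hs : IsPreconnected s) (hsμ : s ⊆ μ.support)
    (h : ∀ c ∈ s, (∀ᶠ x in 𝓝 c ⊓ ae μ, x ∈ D) ∨ ∀ᶠ x in 𝓝 c ⊓ ae μ, x ∉ D) :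
    (∀ᵐ x ∂μ, x ∈ s → x ∈ D) ∨ ∀ᵐ x ∂μ, x ∈ s → x ∉ D := by
  have locally_imp_ae {p : X → Prop} (hp : ∀ c ∈ s, ∀ᶠ x in 𝓝 c ⊓ ae μ, p x) :
      ∀ᵐ x ∂μ, x ∈ s → p x := by
    refine measure_null_of_locally_null _ fun c hc => ?_
    obtain ⟨U, hU, hcU, hUp⟩ := eventually_nhds_inf_ae_iff.1 (hp c (Classical.not_imp.1 hc).1)
    refine ⟨_, inter_mem self_mem_nhdsWithin (mem_nhdsWithin_of_mem_nhds (hU.mem_nhds hcU)),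
      measure_eq_zero_iff_ae_notMem.2 ?_⟩
    filter_upwards [hUp] with x hx hxU using hxU.1 fun _ => hx hxU.2
  have isOpen_local (p : X → Prop) : IsOpen {c | ∀ᶠ x in 𝓝 c ⊓ ae μ, p x} := by
    refine isOpen_iff_mem_nhds.2 fun c hc => ?_
    obtain ⟨U, hU, hcU, h⟩ := eventually_nhds_inf_ae_iff.1 hc
    filter_upwards [hU.mem_nhds hcU] with d hd
    exact eventually_nhds_inf_ae_iff.2 ⟨U, hU, hd, h⟩
  by_cases hin : ∀ c ∈ s, ∀ᶠ x in 𝓝 c ⊓ ae μ, x ∈ D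
  · exact .inl (locally_imp_ae hin)
  by_cases hout : ∀ c ∈ s, ∀ᶠ x in 𝓝 c ⊓ ae μ, x ∉ D
  · exact .inr (locally_imp_ae hout)
  push Not at hin hout
  obtain ⟨a, ha, haD⟩ := hin
  obtain ⟨b, hb, hbD⟩ := hout
  obtain ⟨c, hcs, hcD, hcD'⟩ := hs _ _ (isOpen_local (· ∈ D)) (isOpen_local (· ∉ D)) h
    ⟨b, hb, (h b hb).resolve_right (not_eventually.2 (by simpa using hbD))⟩
    ⟨a, ha, (h a ha).resolve_left (not_eventually.2 haD)⟩
  obtain ⟨U, hU, hcU, hUD⟩ := eventually_nhds_inf_ae_iff.1 (Eventually.and hcD hcD')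
  refine absurd ?_ ((Measure.mem_support_iff_forall c).1 (hsμ hcs) U (hU.mem_nhds hcU)).ne'
  exact measure_eq_zero_iff_ae_notMem.2 (by simpa using hUD)

end GeneralMeasure

section Calculus

lemma injOn_of_forall_hasDerivAt_ne_zero {g g' : ℝ → ℝ} {J : Set ℝ} (hJ : J.OrdConnected)
    (hg : ∀ x ∈ J, HasDerivAt g (g' x) x) (hg' : ∀ x ∈ J, g' x ≠ 0) : InjOn g J := by
  intro a ha b hb hab
  by_contra hne
  wlog hlt : a < b generalizing a b
  · exact this hb ha hab.symm (Ne.symm hne) ((not_lt.1 hlt).lt_of_ne' hne)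
  have hsub : Icc a b ⊆ J := hJ.out ha hb
  obtain ⟨c, hc, hgc⟩ := exists_hasDerivAt_eq_zero hlt
    (fun x hx => (hg x (hsub hx)).continuousAt.continuousWithinAt) hab
    fun x hx => hg x (hsub (Ioo_subset_Icc_self hx))
  exact hg' c (hsub (Ioo_subset_Icc_self hc)) hgc

lemma map_restrict_le_of_le_abs_hasDerivAt {g g' : ℝ → ℝ} {J : Set ℝ} (hJ : J.OrdConnected)
    (hgm : Measurable g) (hg : ∀ x ∈ J, HasDerivAt g (g' x) x) {m : ℝ} (hm : 0 < m)
    (hg' : ∀ x ∈ J, m ≤ |g' x|) :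
    (volume.restrict J).map g ≤ ENNReal.ofReal m⁻¹ • volume.restrict (g '' J) := by
  have hJm : MeasurableSet J := hJ.measurableSet
  have hinj : InjOn g J := injOn_of_forall_hasDerivAt_ne_zero hJ hg
    fun x hx => abs_pos.1 (hm.trans_le (hg' x hx))
  refine Measure.le_iff.2 fun S hS => ?_
  have hA : MeasurableSet (g ⁻¹' S ∩ J) := (hgm hS).inter hJm
  rw [Measure.map_apply hgm hS, Measure.restrict_apply (hgm hS), Measure.smul_apply,
    Measure.restrict_apply hS, ← image_preimage_inter, smul_eq_mul]
  calc volume (g ⁻¹' S ∩ J)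
      = ENNReal.ofReal m⁻¹ * (ENNReal.ofReal m * volume (g ⁻¹' S ∩ J)) := by
        rw [← mul_assoc, ← ENNReal.ofReal_mul (inv_pos.2 hm).le, inv_mul_cancel₀ hm.ne',
          ENNReal.ofReal_one, one_mul]
    _ ≤ ENNReal.ofReal m⁻¹ * ∫⁻ x in g ⁻¹' S ∩ J, ENNReal.ofReal |g' x| := by
        gcongr
        rw [← setLIntegral_const]
        exact setLIntegral_mono' hA fun x hx => ENNReal.ofReal_le_ofReal (hg' x hx.2)
    _ = ENNReal.ofReal m⁻¹ * volume (g '' (g ⁻¹' S ∩ J)) := by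
        rw [← setLIntegral_one, lintegral_image_eq_lintegral_abs_deriv_mul hA
          (fun x hx => (hg x hx.2).hasDerivWithinAt) (hinj.mono inter_subset_right)]
        simp

lemma exists_nhds_tendsto_volume_restrict_symmDiff_preimage {ι : Type*} [TopologicalSpace ι]
    [FirstCountableTopology ι] {f f' : ι → ℝ → ℝ} {c₀ : ι} {v₀ : ℝ}
    (hfm : ∀ c, Measurable (f c)) (hf : ∀ᶠ p in 𝓝 (c₀, v₀), ContinuousAt (↿f) p)
    (hderiv : ∀ᶠ p in 𝓝 (c₀, v₀), HasDerivAt (f p.1) (f' p.1 p.2) p.2)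
    (hf' : ContinuousAt (↿f') (c₀, v₀)) (h0 : f' c₀ v₀ ≠ 0) :
    ∃ J ∈ 𝓝 v₀, ∀ S, MeasurableSet S →
      Tendsto (fun c => volume.restrict J ((f c ⁻¹' S) ∆ (f c₀ ⁻¹' S))) (𝓝 c₀) (𝓝 0) := by
  set m := |f' c₀ v₀| / 2
  have hm : 0 < m := half_pos (abs_pos.2 h0)
  have lower : ∀ᶠ p in 𝓝 (c₀, v₀), m ≤ |f' p.1 p.2| :=
    hf'.abs.eventually_const_le (half_lt_self (abs_pos.2 h0))
  have bounded : ∀ᶠ p in 𝓝 (c₀, v₀), f p.1 p.2 ∈ Metric.ball (f c₀ v₀) 1 :=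
    hf.self_of_nhds.eventually_mem (Metric.ball_mem_nhds _ one_pos)
  obtain ⟨A, hA, B, hB, hAB⟩ := mem_nhds_prod_iff.1 (((hf.and hderiv).and lower).and bounded)
  obtain ⟨ε, hε, hJB⟩ := Metric.mem_nhds_iff.1 hB
  have hJ : (Metric.ball v₀ ε).OrdConnected := (convex_ball v₀ ε).ordConnected
  refine ⟨Metric.ball v₀ ε, Metric.ball_mem_nhds v₀ hε, fun S hS => ?_⟩
  have : IsFiniteMeasure (volume.restrict (Metric.ball v₀ ε)) :=
    ⟨by simpa using ENNReal.mul_lt_top (by simp) (by simp)⟩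
  have : IsFiniteMeasure (ENNReal.ofReal m⁻¹ • volume.restrict (Metric.ball (f c₀ v₀) 1)) :=
    ⟨by simp [ENNReal.mul_lt_top]⟩
  have good {c : ι} (hc : c ∈ A) {v : ℝ} (hv : v ∈ Metric.ball v₀ ε) :=
    hAB (mk_mem_prod hc (hJB hv))
  refine tendsto_measure_symmDiff_preimage_of_map_le
    (ν := ENNReal.ofReal m⁻¹ • volume.restrict (Metric.ball (f c₀ v₀) 1)) hfm (hfm c₀) ?_ ?_ hS
  · filter_upwards [hA] with c hc
    refine (map_restrict_le_of_le_abs_hasDerivAt hJ (hfm c) (fun v hv => (good hc hv).1.1.2) hm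
      fun v hv => (good hc hv).1.2).trans ?_
    gcongr
    exact image_subset_iff.2 fun v hv => (good hc hv).2
  · refine ae_restrict_of_forall_mem measurableSet_ball fun v hv => ?_
    exact (good (mem_of_mem_nhds hA) hv).1.1.1.tendsto.comp
      (Continuous.tendsto (by fun_prop : Continuous fun c => (c, v)) c₀)

end Calculus

section CyclicPairs

variable {X : Type*} [MeasurableSpace X] {μ : Measure X} {q : Kernel X X} {A B A' B' C D : Set X}

/-- For `μ`-almost every starting point in `A`, one step of the transition function `p` leads
into `B`. -/
def LeadsTo (μ : Measure X) (p : X → Measure X) (A B : Set X) : Prop :=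
  ∀ᵐ x ∂μ, x ∈ A → p x B = 1

/-- A pair of sets that are almost surely exchanged by one step of the transition function `p`. -/
def IsCyclicPair (μ : Measure X) (p : X → Measure X) (A B : Set X) : Prop :=
  LeadsTo μ p A B ∧ LeadsTo μ p B A

lemma LeadsTo.mono {p : X → Measure X} [∀ x, IsProbabilityMeasure (p x)] (h : LeadsTo μ p A B)
    (hA : A' ⊆ A) (hB : B ⊆ B') : LeadsTo μ p A' B' := by
  filter_upwards [h] with x hx hxA
  exact le_antisymm prob_le_one ((hx (hA hxA)).symm.trans_le (measure_mono hB))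

lemma LeadsTo.union {p : X → Measure X} (hA : LeadsTo μ p A B) (hA' : LeadsTo μ p A' B) :
    LeadsTo μ p (A ∪ A') B := by
  filter_upwards [hA, hA'] with x hx hx' h using h.elim hx hx'

lemma LeadsTo.inter {p : X → Measure X} [∀ x, IsProbabilityMeasure (p x)] (hB : MeasurableSet B)
    (hB' : MeasurableSet B') (h : LeadsTo μ p A B) (h' : LeadsTo μ p A B') :
    LeadsTo μ p A (B ∩ B') := by
  filter_upwards [h, h'] with x hx hx' hxA
  exact (prob_compl_eq_zero_iff (hB.inter hB')).1 <| by
    rw [compl_inter]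
    exact measure_union_null ((prob_compl_eq_zero_iff hB).2 (hx hxA))
      ((prob_compl_eq_zero_iff hB').2 (hx' hxA))

lemma LeadsTo.congr (hq : q.Invariant μ) (hA : A =ᵐ[μ] A') (hB : B =ᵐ[μ] B')
    (h : LeadsTo μ q A B) : LeadsTo μ q A' B' := by
  have hBB' : ∀ᵐ x ∂μ, B =ᵐ[q x] B' :=
    Measure.ae_ae_of_ae_bind q.aemeasurable (hq.def.symm ▸ hB)
  filter_upwards [h, hA.mem_iff, hBB'] with x hx hxA hxB hxA'
  rw [← measure_congr hxB, hx (hxA.2 hxA')]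

lemma LeadsTo.setLIntegral (hA : MeasurableSet A) (h : LeadsTo μ q A B) :
    ∫⁻ x in A, q x B ∂μ = μ A := by
  rw [setLIntegral_congr_fun_ae hA h, setLIntegral_one]

lemma LeadsTo.measure_le (hq : q.Invariant μ) (hA : MeasurableSet A) (hB : MeasurableSet B)
    (h : LeadsTo μ q A B) : μ A ≤ μ B := by
  rw [← h.setLIntegral hA]
  conv_rhs => rw [← hq.def, Measure.bind_apply hB q.aemeasurable]
  exact setLIntegral_le_lintegral _ _

-- By reversibility the flow from `B` to `A` is that from `A` to `B`, hence `μ A`, which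
-- exhausts `B`.
lemma LeadsTo.isCyclicPair [IsFiniteMeasure μ] [IsMarkovKernel q] (hq : q.IsReversible μ)
    (hA : MeasurableSet A) (hB : MeasurableSet B) (h : LeadsTo μ q A B) (hAB : μ B ≤ μ A) :
    IsCyclicPair μ q A B := by
  refine ⟨h, (ae_restrict_iff' hB).1 (ae_eq_of_ae_le_of_lintegral_le (g := fun _ => 1) ?_ ?_
    aemeasurable_const ?_)⟩
  · exact ae_of_all _ fun x => prob_le_one
  · exact ((setLIntegral_mono' hB fun x _ => prob_le_one).trans_lt (by simp)).ne
  · rw [setLIntegral_one, ← hq hA hB, h.setLIntegral hA]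
    exact hAB

lemma IsCyclicPair.eventuallyConst_or_ae_eq_compl [IsProbabilityMeasure μ] [IsMarkovKernel q]
    (herg : KErgodicMeasure μ q) (hA : MeasurableSet A) (hB : MeasurableSet B)
    (h : IsCyclicPair μ q A B) :
    EventuallyConst A (ae μ) ∨ B =ᵐ[μ] (Aᶜ : Set X) := by
  have union_inv : KInvariantSet μ q (A ∪ B) :=
    (h.1.mono subset_rfl subset_union_right).union (h.2.mono subset_rfl subset_union_left)
  have inter_inv : KInvariantSet μ q (A ∩ B) :=
    (h.2.mono inter_subset_right subset_rfl).inter hA hB (h.1.mono inter_subset_left subset_rfl)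
  rcases herg.2 _ (hA.union hB) union_inv with hU | hU
  · exact .inl (eventuallyConst_set.2 (.inr (measure_eq_zero_iff_ae_notMem.1
      (measure_mono_null subset_union_left hU))))
  rcases herg.2 _ (hA.inter hB) inter_inv with hI | hI
  · refine .inr (eventuallyEq_set.2 ?_)
    filter_upwards [(mem_ae_iff_prob_eq_one (hA.union hB)).2 hU,
      measure_eq_zero_iff_ae_notMem.1 hI] with x hx hx'
    grind
  · exact .inl (eventuallyConst_set.2 (.inl (Filter.mem_of_superset
      ((mem_ae_iff_prob_eq_one (hA.inter hB)).2 hI) inter_subset_left)))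

lemma IsCyclicPair.ae_eq_or_ae_eq_compl [IsProbabilityMeasure μ] [IsMarkovKernel q]
    (herg : KErgodicMeasure μ q) (hA : MeasurableSet A) (hB : MeasurableSet B)
    (hA' : MeasurableSet A') (hB' : MeasurableSet B') (h : IsCyclicPair μ q A B)
    (h' : IsCyclicPair μ q A' B') (hAB : B =ᵐ[μ] (Aᶜ : Set X)) (hAB' : B' =ᵐ[μ] (A'ᶜ : Set X)) :
    A' =ᵐ[μ] A ∨ A' =ᵐ[μ] (Aᶜ : Set X) := by
  have inter_leads {A A' B B' : Set X} (hB : MeasurableSet B) (hB' : MeasurableSet B')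
      (h : LeadsTo μ q A B) (h' : LeadsTo μ q A' B') : LeadsTo μ q (A ∩ A') (B ∩ B') :=
    (h.mono inter_subset_left subset_rfl).inter hB hB' (h'.mono inter_subset_right subset_rfl)
  have inv : KInvariantSet μ q (A ∩ A' ∪ B ∩ B') :=
    ((inter_leads hB hB' h.1 h'.1).mono subset_rfl subset_union_right).union
      ((inter_leads hA hA' h.2 h'.2).mono subset_rfl subset_union_left)
  have hmeas : MeasurableSet (A ∩ A' ∪ B ∩ B') := (hA.inter hA').union (hB.inter hB')
  rcases herg.2 _ hmeas inv with h0 | h1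
  · refine .inr (eventuallyEq_set.2 ?_)
    filter_upwards [measure_eq_zero_iff_ae_notMem.1 h0, hAB.mem_iff, hAB'.mem_iff] with x
    grind
  · refine .inl (eventuallyEq_set.2 ?_)
    filter_upwards [(mem_ae_iff_prob_eq_one hmeas).2 h1, hAB.mem_iff, hAB'.mem_iff] with x
    grind

lemma IsCyclicPair.ae_eq_of_eventuallyConst [IsProbabilityMeasure μ] (hq : q.Invariant μ)
    (hA : MeasurableSet A) (hB : MeasurableSet B) (h : IsCyclicPair μ q A B)
    (hconst : EventuallyConst A (ae μ)) : B =ᵐ[μ] A := by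
  rcases eventuallyConst_set'.1 hconst with h0 | h1
  · refine (ae_eq_empty.2 ?_).trans h0.symm
    exact le_zero_iff.1 ((h.2.measure_le hq hB hA).trans_eq (ae_eq_empty.1 h0))
  · refine (ae_eq_univ_iff_measure_eq hB.nullMeasurableSet).2 (le_antisymm ?_ ?_) |>.trans h1.symm
    · exact measure_mono (subset_univ B)
    · exact (measure_congr h1).symm.trans_le (h.1.measure_le hq hA hB)

lemma exists_forall_isCyclicPair [IsProbabilityMeasure μ] [IsMarkovKernel q]
    (herg : KErgodicMeasure μ q) : ∃ C, MeasurableSet C ∧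
      ∀ A B, MeasurableSet A → MeasurableSet B → IsCyclicPair μ q A B →
        EventuallyConst A (ae μ) ∨ (A =ᵐ[μ] C ∧ B =ᵐ[μ] (Cᶜ : Set X)) ∨
        (A =ᵐ[μ] (Cᶜ : Set X) ∧ B =ᵐ[μ] C) := by
  by_cases htriv : ∀ A B, MeasurableSet A → MeasurableSet B → IsCyclicPair μ q A B →
      EventuallyConst A (ae μ)
  · exact ⟨∅, .empty, fun A B hA hB h => .inl (htriv A B hA hB h)⟩
  push Not at htriv
  obtain ⟨C, D, hC, hD, hCD, hne⟩ := htriv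
  have hDC := (hCD.eventuallyConst_or_ae_eq_compl herg hC hD).resolve_left hne
  refine ⟨C, hC, fun A B hA hB h => ?_⟩
  refine (h.eventuallyConst_or_ae_eq_compl herg hA hB).imp_right fun hBA => ?_
  refine (hCD.ae_eq_or_ae_eq_compl herg hC hD hA hB h hDC hBA).imp (fun hAC => ⟨hAC, ?_⟩)
    fun hAC => ⟨hAC, ?_⟩
  · exact hBA.trans hAC.compl
  · simpa using hBA.trans hAC.compl

end CyclicPairs

section UniformMeasure

instance isProbabilityMeasure_m1 : IsProbabilityMeasure m1 where
  measure_univ := by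
    simp only [m1, Measure.smul_apply, Measure.restrict_apply_univ, Real.volume_Ioo, smul_eq_mul]
    norm_num
    exact ENNReal.inv_mul_cancel (by norm_num) (by norm_num)

lemma m1_apply {S : Set ℝ} (hS : MeasurableSet S) : m1 S = 2⁻¹ * volume (S ∩ Ioo (-1) 1) := by
  simp [m1, Measure.restrict_apply hS]

lemma ae_m1_mem_Ioo : ∀ᵐ x ∂m1, x ∈ Ioo (-1 : ℝ) 1 :=
  Measure.ae_smul_measure (ae_restrict_mem measurableSet_Ioo) _

lemma measurePreserving_neg_m1 : MeasurePreserving Neg.neg m1 m1 := by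
  have h := (Measure.measurePreserving_neg (volume : Measure ℝ)).restrict_preimage
    (measurableSet_Ioo (a := (-1 : ℝ)) (b := 1))
  rw [neg_preimage, neg_Ioo, neg_neg] at h
  exact h.smul_measure _

lemma ae_neg_m1_iff {p : ℝ → Prop} : (∀ᵐ x ∂m1, p (-x)) ↔ ∀ᵐ x ∂m1, p x :=
  ⟨fun h => by simpa using measurePreserving_neg_m1.quasiMeasurePreserving.ae h,
    fun h => measurePreserving_neg_m1.quasiMeasurePreserving.ae h⟩

lemma ae_eq_neg_m1 {A B : Set ℝ} (h : A =ᵐ[m1] B) : (-A : Set ℝ) =ᵐ[m1] (-B : Set ℝ) :=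
  measurePreserving_neg_m1.quasiMeasurePreserving.preimage_ae_eq h

lemma m1_neg {A : Set ℝ} (hA : MeasurableSet A) : m1 (-A) = m1 A :=
  measurePreserving_neg_m1.measure_preimage hA.nullMeasurableSet

lemma Ioo_subset_support_m1 : Ioo (-1 : ℝ) 1 ⊆ m1.support := by
  intro x hx
  have h : volume.restrict (Ioo (-1 : ℝ) 1) ≪ m1 :=
    Measure.absolutelyContinuous_smul (by simp)
  refine h.support_mono (Measure.interior_inter_support ⟨by rwa [interior_Ioo], ?_⟩)
  simp [Measure.support_eq_univ]

lemma Reversible1.isReversible {q : Kernel ℝ ℝ} [IsMarkovKernel q] (hq : Reversible1 q) :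
    q.IsReversible m1 := by
  have bddCtsOn (f : BoundedContinuousFunction ℝ ℝ) : BddCtsOn (Ioo (-1 : ℝ) 1) f :=
    ⟨f.continuous.continuousOn, ‖f‖, fun x _ => f.norm_coe_le_norm x⟩
  have integrable (f g : BoundedContinuousFunction ℝ ℝ) :
      Integrable (fun p : ℝ × ℝ => f p.1 * g p.2) (m1 ⊗ₘ q) := by
    refine .of_bound (by fun_prop : Continuous _).aestronglyMeasurable (‖f‖ * ‖g‖)
      (ae_of_all _ fun p => ?_)
    rw [norm_mul]
    gcongr <;> apply BoundedContinuousFunction.norm_coe_le_norm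
  have swap_eq : m1 ⊗ₘ q = (m1 ⊗ₘ q).map Prod.swap := by
    refine Measure.ext_of_integral_mul_boundedContinuousFunction fun f g => ?_
    rw [integral_map (by fun_prop) (by fun_prop : Continuous _).aestronglyMeasurable]
    simp only [Prod.fst_swap, Prod.snd_swap]
    rw [Measure.integral_compProd (integrable f g)]
    simp only [mul_comm (f _)]
    rw [Measure.integral_compProd (integrable g f)]
    simpa only [integral_const_mul, mul_comm (g _), integral_mul_const] using
      hq g f (bddCtsOn g) (bddCtsOn f)
  intro A B hA hB
  rw [← Measure.compProd_apply_prod hA hB, swap_eq, Measure.map_apply measurable_swap (hA.prod hB),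
    preimage_swap_prod, Measure.compProd_apply_prod hB hA]

end UniformMeasure

section Chord

variable {γ : ℝ} {P N : Set (ℝ × ℝ)}

/-- The distribution of the coordinate `v` under Lebesgue measure on `E`: its density is the
length of the chord `E_v`. Outside `|v| < csc γ` the square root vanishes. -/
def chordMeasure (γ : ℝ) : Measure ℝ :=
  volume.withDensity fun v => ENNReal.ofReal (2 * Real.sqrt (1 - v ^ 2 * Real.sin γ ^ 2))

instance sFinite_chordMeasure (γ : ℝ) : SFinite (chordMeasure γ) := by
  unfold chordMeasure; infer_instance

/-- The parametrization of `E` by pairs `(v, x)`, where `x ∈ (-1, 1)` is the affine coordinate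
on the horizontal chord at height `v`. -/
def chordChart (γ : ℝ) (p : ℝ × ℝ) : ℝ × ℝ := (ellMap γ p.1 p.2, p.1)

/-- The slice `[P]_v` of `P` at height `v`, in the affine coordinate of the chord. It agrees with
`brV γ P v` on `(-1, 1)`; the slice `[P]^u` is `chordSlice γ (Prod.swap ⁻¹' P) u`. -/
def chordSlice (γ : ℝ) (P : Set (ℝ × ℝ)) (v : ℝ) : Set ℝ := {x | (ellMap γ v x, v) ∈ P}

/-- The reflection `(u, v) ↦ (-u - 2 v cos γ, v)` of `E` that reverses every horizontal chord. -/
def chordReflect (γ : ℝ) (p : ℝ × ℝ) : ℝ × ℝ := (-p.1 - 2 * p.2 * Real.cos γ, p.2)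

@[fun_prop]
lemma continuous_ellMap (γ : ℝ) : Continuous fun p : ℝ × ℝ => ellMap γ p.1 p.2 := by
  unfold ellMap; fun_prop

lemma measurable_ellInv (γ : ℝ) : Measurable fun p : ℝ × ℝ => ellInv γ p.1 p.2 := by
  unfold ellInv; fun_prop

lemma measurable_chordChart (γ : ℝ) : Measurable (chordChart γ) :=
  (by unfold chordChart; fun_prop : Continuous (chordChart γ)).measurable

lemma measurable_chordReflect (γ : ℝ) : Measurable (chordReflect γ) := by
  unfold chordReflect; fun_prop

lemma measurableSet_chordSlice (hP : MeasurableSet P) (v : ℝ) :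
    MeasurableSet (chordSlice γ P v) :=
  measurable_prodMk_left (measurable_chordChart γ hP)

lemma measurableSet_Eset (γ : ℝ) : MeasurableSet (Eset γ) :=
  (isOpen_lt (by fun_prop) (by fun_prop) : IsOpen (Eset γ)).measurableSet

lemma swap_preimage_Eset (γ : ℝ) : Prod.swap ⁻¹' Eset γ = Eset γ := by
  ext p
  simp only [Eset, mem_preimage, mem_ofPred_eq, Prod.fst_swap, Prod.snd_swap]
  ring_nf

lemma one_sub_sq_mul_sin_sq_pos {u v : ℝ} (h : (u, v) ∈ Eset γ) :
    0 < 1 - v ^ 2 * Real.sin γ ^ 2 := by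
  simp only [Eset, mem_ofPred_eq] at h
  rw [Real.sin_sq]
  nlinarith [sq_nonneg (u + Real.cos γ * v)]

lemma ellMap_mem_Eset_iff {v : ℝ} (hv : 0 < 1 - v ^ 2 * Real.sin γ ^ 2) (x : ℝ) :
    (ellMap γ v x, v) ∈ Eset γ ↔ x ∈ Ioo (-1 : ℝ) 1 := by
  have one_sub_eq : 1 - (ellMap γ v x ^ 2 + 2 * Real.cos γ * ellMap γ v x * v + v ^ 2) =
      (1 - x ^ 2) * (1 - v ^ 2 * Real.sin γ ^ 2) := by
    have hs := Real.sq_sqrt hv.le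
    unfold ellMap
    linear_combination -x ^ 2 * hs + v ^ 2 * Real.sin_sq γ
  rw [mem_Ioo, ← abs_lt, ← sq_lt_one_iff_abs_lt_one, ← sub_pos, ← mul_pos_iff_of_pos_right hv,
    ← one_sub_eq, sub_pos, Eset, mem_ofPred_eq]

lemma ellInv_ellMap {v : ℝ} (hv : 0 < 1 - v ^ 2 * Real.sin γ ^ 2) (x : ℝ) :
    ellInv γ v (ellMap γ v x) = x := by
  have := (Real.sqrt_pos.2 hv).ne'
  unfold ellMap ellInv
  field_simp
  ring

lemma volume_preimage_chord_inter_Eset (S : Set (ℝ × ℝ)) (hS : MeasurableSet S) (v : ℝ) :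
    volume ((fun u => (u, v)) ⁻¹' (S ∩ Eset γ)) =
      ENNReal.ofReal (2 * Real.sqrt (1 - v ^ 2 * Real.sin γ ^ 2)) * m1 (chordSlice γ S v) := by
  by_cases hv : 0 < 1 - v ^ 2 * Real.sin γ ^ 2
  · set r := Real.sqrt (1 - v ^ 2 * Real.sin γ ^ 2)
    have hr0 : 0 < r := Real.sqrt_pos.2 hv
    have slice_eq : chordSlice γ S v ∩ Ioo (-1) 1 = (fun x => x * r) ⁻¹'
        ((fun x => -v * Real.cos γ + x) ⁻¹' ((fun u => (u, v)) ⁻¹' (S ∩ Eset γ))) := by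
      ext x
      exact and_congr_right' (ellMap_mem_Eset_iff hv x).symm
    rw [m1_apply (measurableSet_chordSlice hS v), slice_eq,
      Real.volume_preimage_mul_right hr0.ne', measure_preimage_add, abs_of_pos (inv_pos.2 hr0),
      ← mul_assoc, ← mul_assoc, ENNReal.ofReal_mul two_pos.le, mul_right_comm _ _ 2⁻¹,
      mul_assoc _ _ (ENNReal.ofReal r⁻¹), ← ENNReal.ofReal_mul hr0.le, mul_inv_cancel₀ hr0.ne']
    simp [ENNReal.mul_inv_cancel]
  · have empty : (fun u => (u, v)) ⁻¹' (S ∩ Eset γ) = ∅ :=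
      eq_empty_of_forall_notMem fun u hu => hv (one_sub_sq_mul_sin_sq_pos hu.2)
    simp [empty, Real.sqrt_eq_zero_of_nonpos (not_lt.1 hv)]

lemma map_chordChart (γ : ℝ) :
    ((chordMeasure γ).prod m1).map (chordChart γ) = volume.restrict (Eset γ) := by
  ext S hS
  rw [Measure.restrict_apply hS, Measure.map_apply (measurable_chordChart γ) hS,
    Measure.prod_apply (measurable_chordChart γ hS), Measure.volume_eq_prod,
    Measure.prod_apply_symm (hS.inter (measurableSet_Eset γ)), chordMeasure,
    lintegral_withDensity_eq_lintegral_mul _ (by fun_prop)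
      (measurable_measure_prodMk_left (measurable_chordChart γ hS))]
  exact lintegral_congr fun v => (volume_preimage_chord_inter_Eset S hS v).symm

lemma measurable_m1_chordSlice (hP : MeasurableSet P) :
    Measurable fun v => m1 (chordSlice γ P v) :=
  measurable_measure_prodMk_left (measurable_chordChart γ hP)

lemma lintegral_m1_chordSlice (hP : MeasurableSet P) :
    ∫⁻ v, m1 (chordSlice γ P v) ∂chordMeasure γ = volume.restrict (Eset γ) P := by
  rw [← map_chordChart, Measure.map_apply (measurable_chordChart γ) hP,
    Measure.prod_apply (measurable_chordChart γ hP)]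
  rfl

lemma ae_restrict_Eset_iff {p : ℝ × ℝ → Prop} (hp : MeasurableSet {z | p z}) :
    (∀ᵐ z ∂volume.restrict (Eset γ), p z) ↔
      ∀ᵐ v ∂chordMeasure γ, ∀ᵐ x ∂m1, p (ellMap γ v x, v) := by
  rw [← map_chordChart, ae_map_iff (measurable_chordChart γ).aemeasurable hp]
  exact Measure.ae_prod_iff_ae_ae (measurable_chordChart γ hp)

lemma ae_eq_restrict_Eset_iff (hP : MeasurableSet P) (hN : MeasurableSet N) :
    P =ᵐ[volume.restrict (Eset γ)] N ↔
      ∀ᵐ v ∂chordMeasure γ, chordSlice γ P v =ᵐ[m1] chordSlice γ N v := by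
  simp_rw [Filter.eventuallyEq_set]
  exact ae_restrict_Eset_iff (hP.iff hN)

lemma chordMeasure_le (γ : ℝ) : chordMeasure γ ≤ (2 : ℝ≥0∞) • volume := by
  rw [chordMeasure, ← withDensity_const]
  refine withDensity_mono (ae_of_all _ fun v => ENNReal.ofReal_le_ofNat.2 ?_)
  suffices Real.sqrt (1 - v ^ 2 * Real.sin γ ^ 2) ≤ 1 by linarith
  exact Real.sqrt_le_one.2 (by nlinarith [sq_nonneg (v * Real.sin γ)])

lemma ae_chordMeasure_pos (γ : ℝ) : ∀ᵐ v ∂chordMeasure γ, 0 < 1 - v ^ 2 * Real.sin γ ^ 2 := by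
  rw [chordMeasure, ae_withDensity_iff (by fun_prop)]
  refine ae_of_all _ fun v h => ?_
  by_contra hv
  simp [Real.sqrt_eq_zero_of_nonpos (not_lt.1 hv)] at h

lemma measurePreserving_neg_chordMeasure (γ : ℝ) :
    MeasurePreserving Neg.neg (chordMeasure γ) (chordMeasure γ) := by
  refine ⟨measurable_neg, Measure.ext fun S hS => ?_⟩
  rw [Measure.map_apply measurable_neg hS, chordMeasure, withDensity_apply _ (measurable_neg hS),
    withDensity_apply _ hS,
    ← (Measure.measurePreserving_neg volume).setLIntegral_comp_preimage hS (by fun_prop)]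
  simp only [neg_sq]

lemma measurePreserving_swap_Eset (γ : ℝ) : MeasurePreserving Prod.swap
    (volume.restrict (Eset γ)) (volume.restrict (Eset γ)) := by
  have h := (Measure.measurePreserving_swap (μ := (volume : Measure ℝ))
    (ν := (volume : Measure ℝ))).restrict_preimage (measurableSet_Eset γ)
  rwa [swap_preimage_Eset] at h

lemma chordReflect_chordChart (γ v x : ℝ) :
    chordReflect γ (chordChart γ (v, x)) = chordChart γ (v, -x) := by
  simp only [chordReflect, chordChart, ellMap, Prod.mk.injEq, and_true]
  ring

lemma measurePreserving_chordReflect_Eset (γ : ℝ) : MeasurePreserving (chordReflect γ)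
    (volume.restrict (Eset γ)) (volume.restrict (Eset γ)) := by
  refine ⟨measurable_chordReflect γ, ?_⟩
  have comp_eq : chordReflect γ ∘ chordChart γ = chordChart γ ∘ Prod.map id Neg.neg :=
    funext fun p => chordReflect_chordChart γ p.1 p.2
  have h := (MeasurePreserving.id (chordMeasure γ)).prod measurePreserving_neg_m1
  rw [← map_chordChart, Measure.map_map (measurable_chordReflect γ) (measurable_chordChart γ),
    comp_eq, ← Measure.map_map (measurable_chordChart γ) h.measurable, h.map_eq]

lemma chordSlice_preimage_chordReflect (γ : ℝ) (P : Set (ℝ × ℝ)) (v : ℝ) :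
    chordSlice γ (chordReflect γ ⁻¹' P) v = -chordSlice γ P v :=
  ext fun x => by
    change chordReflect γ (chordChart γ (v, x)) ∈ P ↔ _
    rw [chordReflect_chordChart]
    rfl

lemma chordSlice_swap_preimage_chordReflect (hcos : Real.cos γ = 0) (P : Set (ℝ × ℝ)) (u : ℝ) :
    chordSlice γ (Prod.swap ⁻¹' (chordReflect γ ⁻¹' P)) u =
      chordSlice γ (Prod.swap ⁻¹' P) (-u) := by
  ext x
  simp [chordSlice, chordReflect, ellMap, hcos]

lemma volume_Eset_ne_top (hγ : Real.sin γ ≠ 0) : volume (Eset γ) ≠ ∞ := by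
  have subset_ball : Eset γ ⊆ Metric.ball 0 |(Real.sin γ)⁻¹| := by
    have bound {u v : ℝ} (h : (u, v) ∈ Eset γ) : |v| < |(Real.sin γ)⁻¹| := by
      have hlt := one_sub_sq_mul_sin_sq_pos h
      rw [← mul_pow, sub_pos, sq_lt_one_iff_abs_lt_one, abs_mul] at hlt
      rwa [abs_inv, ← one_div, lt_div_iff₀ (abs_pos.2 hγ)]
    rintro ⟨u, v⟩ h
    rw [mem_ball_zero_iff, Prod.norm_def, max_lt_iff]
    exact ⟨bound (u := v) ((swap_preimage_Eset γ).symm ▸ h), bound h⟩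
  exact measure_ne_top_of_subset subset_ball measure_ball_lt_top.ne

lemma isFiniteMeasure_chordMeasure (hγ : Real.sin γ ≠ 0) : IsFiniteMeasure (chordMeasure γ) := by
  refine ⟨?_⟩
  have h := lintegral_m1_chordSlice (γ := γ) MeasurableSet.univ
  rw [Measure.restrict_apply_univ] at h
  simpa [chordSlice, ← h] using (volume_Eset_ne_top hγ).lt_top

end Chord

-- Within `J ∩ V` the set `T c` is conull if `c ∈ D` and null otherwise, while its measure converges
-- along `l`.
lemma eventually_mem_or_eventually_notMem_of_tendsto_measure_symmDiff {X Y : Type*}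
    [MeasurableSpace X] {μ : Measure X} [IsFiniteMeasure μ] {l : Filter Y} {T : Y → Set X}
    {T₀ J V : Set X} {D : Set Y} (hT : ∀ c, MeasurableSet (T c)) (hT₀ : MeasurableSet T₀)
    (hV : MeasurableSet V) (hJV : μ (J ∩ V) ≠ 0)
    (hlim : Tendsto (fun c => μ.restrict J (T c ∆ T₀)) l (𝓝 0))
    (hTD : ∀ᶠ c in l, ∀ᵐ x ∂μ, x ∈ V → (x ∈ T c ↔ c ∈ D)) :
    (∀ᶠ c in l, c ∈ D) ∨ ∀ᶠ c in l, c ∉ D := by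
  set ν := μ.restrict (J ∩ V)
  have hν : NeZero ν := ⟨Measure.restrict_eq_zero.not.2 hJV⟩
  have hlim_ν : Tendsto (fun c => ν (T c)) l (𝓝 (ν T₀)) :=
    tendsto_measure_of_tendsto_measure_symmDiff hT hT₀ <|
      tendsto_of_tendsto_of_tendsto_of_le_of_le tendsto_const_nhds hlim (fun _ => zero_le)
        fun _ => Measure.restrict_mono_set μ inter_subset_left _
  have hTD_ν : ∀ᶠ c in l, ∀ᵐ x ∂ν, x ∈ T c ↔ c ∈ D := hTD.mono fun c hc =>
    ae_mono (Measure.restrict_mono_set μ inter_subset_right) ((ae_restrict_iff' hV).2 hc)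
  by_cases h₀ : ν T₀ = 0
  · refine .inr ?_
    filter_upwards [hlim_ν.eventually_ne (h₀.trans_ne (NeZero.ne' (ν univ))), hTD_ν]
      with c hne hc hcD
    exact hne (measure_congr (eventuallyEq_univ.2 (hc.mono fun x hx => hx.2 hcD)))
  · refine .inl ?_
    filter_upwards [hlim_ν.eventually_ne h₀, hTD_ν] with c hne hc
    by_contra hcD
    exact hne (measure_eq_zero_iff_ae_notMem.2 (hc.mono fun x hx hxT => hcD (hx.1 hxT)))

section Regularity

variable {γ : ℝ} {P G : Set (ℝ × ℝ)} {𝒞 : Set (Set ℝ)} {D : Set ℝ} {c₀ v₀ : ℝ}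

/-- The change of coordinates on `E` from `(v, c)`, with `c` the affine coordinate on the horizontal
chord at height `v`, to `(u, x)`, with `x` the affine coordinate on the vertical chord at
abscissa `u`. -/
def chordTransition (γ : ℝ) (p : ℝ × ℝ) : ℝ × ℝ :=
  (ellMap γ p.1 p.2, ellInv γ (ellMap γ p.1 p.2) p.1)

lemma measurable_chordTransition (γ : ℝ) : Measurable (chordTransition γ) :=
  (measurable_fst.prodMk (measurable_ellInv γ)).comp (measurable_chordChart γ)

lemma hasDerivAt_ellMap {v : ℝ} (c : ℝ) (hv : 0 < 1 - v ^ 2 * Real.sin γ ^ 2) :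
    HasDerivAt (fun v => ellMap γ v c)
      (-Real.cos γ - c * v * Real.sin γ ^ 2 / Real.sqrt (1 - v ^ 2 * Real.sin γ ^ 2)) v := by
  have h := ((((hasDerivAt_id' v).fun_pow 2).mul_const (Real.sin γ ^ 2)).const_sub 1).sqrt hv.ne'
  have h' := (hasDerivAt_id' v).fun_neg.mul_const (Real.cos γ)
  refine (h'.fun_add (h.const_mul c)).congr_deriv ?_
  field_simp
  ring

lemma one_sub_sq_ellMap_mul_sin_sq_pos {v c : ℝ} (hv : 0 < 1 - v ^ 2 * Real.sin γ ^ 2)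
    (hc : c ∈ Ioo (-1 : ℝ) 1) : 0 < 1 - ellMap γ v c ^ 2 * Real.sin γ ^ 2 :=
  one_sub_sq_mul_sin_sq_pos (u := v) <| by
    rw [← swap_preimage_Eset]
    exact (ellMap_mem_Eset_iff hv c).2 hc

lemma hasDerivAt_ellInv_ellMap {v c : ℝ} (hv : 0 < 1 - v ^ 2 * Real.sin γ ^ 2)
    (hc : c ∈ Ioo (-1 : ℝ) 1) :
    HasDerivAt (fun v => ellInv γ (ellMap γ v c) v)
      (Real.sin γ ^ 2 * (1 - c ^ 2) / Real.sqrt (1 - ellMap γ v c ^ 2 * Real.sin γ ^ 2) ^ 3) v := by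
  have hu := one_sub_sq_ellMap_mul_sin_sq_pos hv hc
  have hu' := hasDerivAt_ellMap c hv
  have hnum := (hasDerivAt_id' v).fun_add (hu'.mul_const (Real.cos γ))
  have hden := (((hu'.fun_pow 2).mul_const (Real.sin γ ^ 2)).const_sub 1).sqrt hu.ne'
  refine (hnum.fun_div hden (Real.sqrt_pos.2 hu).ne').congr_deriv ?_
  have hr := (Real.sqrt_pos.2 hv).ne'
  have hr_sq := Real.sq_sqrt hv.le
  have hs := (Real.sqrt_pos.2 hu).ne'
  have hs_sq := Real.sq_sqrt hu.le
  have hu_eq : ellMap γ v c = -v * Real.cos γ + c * Real.sqrt (1 - v ^ 2 * Real.sin γ ^ 2) := rfl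
  set r := Real.sqrt (1 - v ^ 2 * Real.sin γ ^ 2)
  set s := Real.sqrt (1 - ellMap γ v c ^ 2 * Real.sin γ ^ 2)
  set u := ellMap γ v c
  set u' := -Real.cos γ - c * v * Real.sin γ ^ 2 / r with hu'_eq
  have wronskian : v * u' - u = -c / r := by
    rw [hu'_eq, hu_eq]
    field_simp
    linear_combination -c * hr_sq
  have numerator : (1 + u' * Real.cos γ) * s ^ 2 + (v + u * Real.cos γ) * (u * u' * Real.sin γ ^ 2)
      = Real.sin γ ^ 2 * (1 - c ^ 2) :=
    calc _ = 1 + u' * Real.cos γ + u * Real.sin γ ^ 2 * (v * u' - u) := by rw [hs_sq]; ring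
      _ = 1 - Real.cos γ ^ 2 - Real.sin γ ^ 2 * c ^ 2 := by
        rw [wronskian, hu'_eq, hu_eq]
        field_simp
        ring
      _ = _ := by rw [← Real.sin_sq]; ring
  rw [← numerator]
  field_simp
  ring

lemma ae_deriv_ellMap_ne_zero (hγ : Real.sin γ ≠ 0) {c : ℝ} (hc : c ≠ 0 ∨ Real.cos γ ≠ 0) :
    ∀ᵐ v ∂chordMeasure γ, deriv (fun v => ellMap γ v c) v ≠ 0 := by
  -- `v ^ 2 = k` is the equation of the critical points with the square root eliminated.
  set k := Real.cos γ ^ 2 / (Real.sin γ ^ 2 * (c ^ 2 * Real.sin γ ^ 2 + Real.cos γ ^ 2))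
  have hk : (c ^ 2 * Real.sin γ ^ 2 + Real.cos γ ^ 2) ≠ 0 := by
    rcases hc with hc | hc <;> positivity
  have noncritical : ∀ᵐ v ∂chordMeasure γ, v ∉ ({Real.sqrt k, -Real.sqrt k} : Set ℝ) :=
    (withDensity_absolutelyContinuous _ _).ae_le ((Set.toFinite _).countable.ae_notMem volume)
  filter_upwards [noncritical, ae_chordMeasure_pos γ] with v hv hpos h0
  refine hv (eq_or_eq_neg_of_sq_eq_sq v (Real.sqrt k) ?_)
  rw [(hasDerivAt_ellMap c hpos).deriv, sub_eq_zero, eq_div_iff (Real.sqrt_pos.2 hpos).ne'] at h0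
  have h0_sq := congrArg (· ^ 2) h0
  simp only [mul_pow, neg_sq, Real.sq_sqrt hpos.le] at h0_sq
  rw [Real.sq_sqrt (by positivity), eq_div_iff (by positivity)]
  linear_combination -h0_sq

lemma exists_nhds_tendsto_volume_restrict_symmDiff_ellMap
    (hv₀ : 0 < 1 - v₀ ^ 2 * Real.sin γ ^ 2) (hne : deriv (fun v => ellMap γ v c₀) v₀ ≠ 0) :
    ∃ J ∈ 𝓝 v₀, ∀ S, MeasurableSet S → Tendsto (fun c => volume.restrict J
      (((ellMap γ · c) ⁻¹' S) ∆ ((ellMap γ · c₀) ⁻¹' S))) (𝓝 c₀) (𝓝 0) := by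
  have hr := (Real.sqrt_pos.2 hv₀).ne'
  have pos : ∀ᶠ p : ℝ × ℝ in 𝓝 (c₀, v₀), 0 < 1 - p.2 ^ 2 * Real.sin γ ^ 2 :=
    (by fun_prop : ContinuousAt _ _).eventually_const_lt hv₀
  refine exists_nhds_tendsto_volume_restrict_symmDiff_preimage (f := fun c v => ellMap γ v c)
    (f' := fun c v =>
      -Real.cos γ - c * v * Real.sin γ ^ 2 / Real.sqrt (1 - v ^ 2 * Real.sin γ ^ 2))
    (fun c => by unfold ellMap; fun_prop) (.of_forall fun p => by fun_prop)
    (pos.mono fun p => hasDerivAt_ellMap p.1) ?_ ?_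
  · simp only [Function.HasUncurry.uncurry, id_eq]
    fun_prop (disch := assumption)
  · rwa [(hasDerivAt_ellMap c₀ hv₀).deriv] at hne

lemma exists_nhds_tendsto_volume_restrict_symmDiff_ellInv_ellMap (hγ : Real.sin γ ≠ 0)
    (hc₀ : c₀ ∈ Ioo (-1 : ℝ) 1) (hv₀ : 0 < 1 - v₀ ^ 2 * Real.sin γ ^ 2) :
    ∃ J ∈ 𝓝 v₀, ∀ S, MeasurableSet S → Tendsto (fun c => volume.restrict J
      (((fun v => ellInv γ (ellMap γ v c) v) ⁻¹' S) ∆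
        ((fun v => ellInv γ (ellMap γ v c₀) v) ⁻¹' S))) (𝓝 c₀) (𝓝 0) := by
  have pos : ∀ᶠ p : ℝ × ℝ in 𝓝 (c₀, v₀), 0 < 1 - p.2 ^ 2 * Real.sin γ ^ 2 :=
    (by fun_prop : ContinuousAt _ _).eventually_const_lt hv₀
  have mem : ∀ᶠ p : ℝ × ℝ in 𝓝 (c₀, v₀), p.1 ∈ Ioo (-1 : ℝ) 1 :=
    continuousAt_fst.eventually_mem (Ioo_mem_nhds hc₀.1 hc₀.2)
  have hr {c v : ℝ} (hv : 0 < 1 - v ^ 2 * Real.sin γ ^ 2) (hc : c ∈ Ioo (-1 : ℝ) 1) :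
      Real.sqrt (1 - ellMap γ v c ^ 2 * Real.sin γ ^ 2) ≠ 0 :=
    (Real.sqrt_pos.2 (one_sub_sq_ellMap_mul_sin_sq_pos hv hc)).ne'
  refine exists_nhds_tendsto_volume_restrict_symmDiff_preimage
    (f := fun c v => ellInv γ (ellMap γ v c) v) (f' := fun c v =>
      Real.sin γ ^ 2 * (1 - c ^ 2) / Real.sqrt (1 - ellMap γ v c ^ 2 * Real.sin γ ^ 2) ^ 3)
    (fun c => by unfold ellInv ellMap; fun_prop) ?_
    ((pos.and mem).mono fun p hp => hasDerivAt_ellInv_ellMap hp.1 hp.2) ?_ ?_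
  · filter_upwards [pos.and mem] with p hp
    simp only [Function.HasUncurry.uncurry, id_eq, ellInv]
    exact .div (by fun_prop) (by fun_prop) (hr hp.1 hp.2)
  · simp only [Function.HasUncurry.uncurry, id_eq]
    exact .div (by fun_prop) (by fun_prop) (pow_ne_zero 3 (hr hv₀ hc₀))
  · exact div_ne_zero (mul_ne_zero (pow_ne_zero 2 hγ) (by nlinarith [hc₀.1, hc₀.2]))
      (pow_ne_zero 3 (hr hv₀ hc₀))

lemma exists_nhds_tendsto_volume_restrict_symmDiff_chordTransition (hγ : Real.sin γ ≠ 0)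
    (h𝒞 : 𝒞.Finite) {t : Set ℝ → Set ℝ} (ht : ∀ C ∈ 𝒞, MeasurableSet (t C))
    (h𝒞m : ∀ C ∈ 𝒞, MeasurableSet C) (hc₀ : c₀ ∈ Ioo (-1 : ℝ) 1)
    (hv₀ : 0 < 1 - v₀ ^ 2 * Real.sin γ ^ 2) (hne : deriv (fun v => ellMap γ v c₀) v₀ ≠ 0) :
    ∃ J ∈ 𝓝 v₀, Tendsto (fun c => volume.restrict J
      (((fun v => chordTransition γ (v, c)) ⁻¹' ⋃ C ∈ 𝒞, t C ×ˢ C) ∆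
        ((fun v => chordTransition γ (v, c₀)) ⁻¹' ⋃ C ∈ 𝒞, t C ×ˢ C))) (𝓝 c₀) (𝓝 0) := by
  obtain ⟨J₁, hJ₁, h₁⟩ := exists_nhds_tendsto_volume_restrict_symmDiff_ellMap hv₀ hne
  obtain ⟨J₂, hJ₂, h₂⟩ :=
    exists_nhds_tendsto_volume_restrict_symmDiff_ellInv_ellMap hγ hc₀ hv₀
  have restrict_inter {J : Set ℝ} (hJ : J₁ ∩ J₂ ⊆ J) {S : ℝ → Set ℝ}
      (h : Tendsto (fun c => volume.restrict J (S c)) (𝓝 c₀) (𝓝 0)) :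
      Tendsto (fun c => volume.restrict (J₁ ∩ J₂) (S c)) (𝓝 c₀) (𝓝 0) :=
    tendsto_of_tendsto_of_tendsto_of_le_of_le tendsto_const_nhds h (fun _ => zero_le)
      fun c => Measure.restrict_mono_set volume hJ (S c)
  exact ⟨J₁ ∩ J₂, inter_mem hJ₁ hJ₂, tendsto_measure_symmDiff_preimage_prodMk h𝒞
    (fun S hS => restrict_inter inter_subset_left (h₁ S hS))
    (fun S hS => restrict_inter inter_subset_right (h₂ S hS)) ht h𝒞m⟩

lemma measurableSet_chordSlice_ae_eq (hP : MeasurableSet P) (hD : MeasurableSet D) :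
    MeasurableSet {v | chordSlice γ P v =ᵐ[m1] D} := by
  simp_rw [← measure_symmDiff_eq_zero_iff]
  exact measurable_measure_prodMk_left
    ((measurable_chordChart γ hP).symmDiff (measurable_snd hD)) (measurableSet_singleton 0)

lemma ae_ae_mem_chordSlice_iff (h𝒞 : 𝒞.Finite) (h𝒞m : ∀ C ∈ 𝒞, MeasurableSet C)
    (hP : MeasurableSet P)
    (h : ∀ᵐ u ∂chordMeasure γ, ∃ C ∈ 𝒞, chordSlice γ (Prod.swap ⁻¹' P) u =ᵐ[m1] C) :
    ∀ᵐ v ∂chordMeasure γ, ∀ᵐ c ∂m1, c ∈ chordSlice γ P v ↔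
      chordTransition γ (v, c) ∈
        ⋃ C ∈ 𝒞, {u | chordSlice γ (Prod.swap ⁻¹' P) u =ᵐ[m1] C} ×ˢ C := by
  set G := ⋃ C ∈ 𝒞, {u | chordSlice γ (Prod.swap ⁻¹' P) u =ᵐ[m1] C} ×ˢ C
  have hG : MeasurableSet G := h𝒞.measurableSet_biUnion fun C hC =>
    (measurableSet_chordSlice_ae_eq (measurable_swap hP) (h𝒞m C hC)).prod (h𝒞m C hC)
  have hGm : MeasurableSet ((fun z : ℝ × ℝ => (z.1, ellInv γ z.1 z.2)) ⁻¹' G) :=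
    (measurable_fst.prodMk (measurable_ellInv γ)) hG
  have swapped : ∀ᵐ z ∂volume.restrict (Eset γ), z.swap ∈ P ↔ (z.2, ellInv γ z.2 z.1) ∈ G := by
    refine (ae_restrict_Eset_iff (p := fun z => z.swap ∈ P ↔ (z.2, ellInv γ z.2 z.1) ∈ G)
      ((measurable_swap hP).iff (measurable_swap hGm))).2 ?_
    filter_upwards [h, ae_chordMeasure_pos γ] with u ⟨C, hC, hu⟩ hpos
    have slices : ∀ᵐ x ∂m1, ∀ C ∈ 𝒞, chordSlice γ (Prod.swap ⁻¹' P) u =ᵐ[m1] C →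
        ((u, ellMap γ u x) ∈ P ↔ x ∈ C) :=
      (ae_ball_iff h𝒞.countable).2 fun C _ =>
        eventually_imp_distrib_left.2 fun hu => hu.mem_iff
    filter_upwards [slices] with x hx
    simp only [Prod.swap_prod_mk, ellInv_ellMap hpos, G, mem_iUnion₂, mem_prod, mem_ofPred_eq]
    exact ⟨fun hxP => ⟨C, hC, hu, (hx C hC hu).1 hxP⟩,
      fun ⟨C', hC', hu', hxC'⟩ => (hx C' hC' hu').2 hxC'⟩
  refine (ae_restrict_Eset_iff (p := fun z => z ∈ P ↔ (z.1, ellInv γ z.1 z.2) ∈ G)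
    (hP.iff hGm)).1 ?_
  simpa using (measurePreserving_swap_Eset γ).quasiMeasurePreserving.ae swapped

lemma ae_ae_chordTransition_mem_iff (hP : MeasurableSet P) (hG : MeasurableSet G)
    (hD : MeasurableSet D) (h : ∀ᵐ v ∂chordMeasure γ, ∀ᵐ c ∂m1, c ∈ chordSlice γ P v ↔
      chordTransition γ (v, c) ∈ G) :
    ∀ᵐ c ∂m1, ∀ᵐ v ∂chordMeasure γ,
      chordSlice γ P v =ᵐ[m1] D → (chordTransition γ (v, c) ∈ G ↔ c ∈ D) := by
  refine (Measure.ae_ae_comm ?_).1 ?_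
  · exact (measurable_fst (measurableSet_chordSlice_ae_eq hP hD)).imp
      ((measurable_chordTransition γ hG).iff (measurable_snd hD))
  · filter_upwards [h] with v hv
    refine eventually_imp_distrib_left.2 fun hvD => ?_
    filter_upwards [hv, hvD.mem_iff] with c hc hcD using hc.symm.trans hcD

lemma eventually_mem_or_eventually_notMem_of_frequently_chordSlice_ae_eq (hγ : Real.sin γ ≠ 0)
    (h𝒞 : 𝒞.Finite) (h𝒞m : ∀ C ∈ 𝒞, MeasurableSet C) (hP : MeasurableSet P)
    (h : ∀ᵐ u ∂chordMeasure γ, ∃ C ∈ 𝒞, chordSlice γ (Prod.swap ⁻¹' P) u =ᵐ[m1] C)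
    (hD : MeasurableSet D) (hPD : ∃ᵐ v ∂chordMeasure γ, chordSlice γ P v =ᵐ[m1] D)
    (hc₀ : c₀ ∈ Ioo (-1 : ℝ) 1) (hc₀γ : c₀ ≠ 0 ∨ Real.cos γ ≠ 0) :
    (∀ᶠ c in 𝓝 c₀ ⊓ ae m1, c ∈ D) ∨ ∀ᶠ c in 𝓝 c₀ ⊓ ae m1, c ∉ D := by
  have := isFiniteMeasure_chordMeasure hγ
  have hU : ∀ C ∈ 𝒞, MeasurableSet {u | chordSlice γ (Prod.swap ⁻¹' P) u =ᵐ[m1] C} :=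
    fun C hC => measurableSet_chordSlice_ae_eq (measurable_swap hP) (h𝒞m C hC)
  set G := ⋃ C ∈ 𝒞, {u | chordSlice γ (Prod.swap ⁻¹' P) u =ᵐ[m1] C} ×ˢ C
  have hG : MeasurableSet G := h𝒞.measurableSet_biUnion fun C hC => (hU C hC).prod (h𝒞m C hC)
  set T : ℝ → Set ℝ := fun c => (fun v => chordTransition γ (v, c)) ⁻¹' G
  have hT (c : ℝ) : MeasurableSet (T c) :=
    ((measurable_chordTransition γ).comp measurable_prodMk_right) hG
  obtain ⟨v₀, ⟨-, hne, hv₀⟩, hpos⟩ := exists_mem_forall_mem_nhdsWithin_pos_measure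
    (frequently_ae_iff.1 (hPD.and_eventually
      ((ae_deriv_ellMap_ne_zero hγ hc₀γ).and (ae_chordMeasure_pos γ))))
  obtain ⟨J, hJ, hlim⟩ :=
    exists_nhds_tendsto_volume_restrict_symmDiff_chordTransition hγ h𝒞 hU h𝒞m hc₀ hv₀ hne
  have hlim_chord : Tendsto (fun c => (chordMeasure γ).restrict J (T c ∆ T c₀)) (𝓝 c₀) (𝓝 0) := by
    have h2 := ENNReal.Tendsto.const_mul hlim (.inr (ENNReal.ofNat_ne_top (n := 2)))
    rw [mul_zero] at h2
    refine tendsto_of_tendsto_of_tendsto_of_le_of_le tendsto_const_nhds h2 (fun _ => zero_le)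
      fun c => ?_
    exact (Measure.restrict_mono subset_rfl (chordMeasure_le γ)).trans_eq
      (Measure.restrict_smul _ _ _) _
  have hJV : chordMeasure γ (J ∩ {v | chordSlice γ P v =ᵐ[m1] D}) ≠ 0 :=
    ((hpos _ (inter_mem (mem_nhdsWithin_of_mem_nhds hJ) self_mem_nhdsWithin)).trans_le
      (measure_mono (inter_subset_inter_right _ fun v hv => hv.1))).ne'
  have hTD := ae_ae_chordTransition_mem_iff hP hG hD (ae_ae_mem_chordSlice_iff h𝒞 h𝒞m hP h)
  exact eventually_mem_or_eventually_notMem_of_tendsto_measure_symmDiff hT (hT c₀)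
    (measurableSet_chordSlice_ae_eq hP hD) hJV (hlim_chord.mono_left inf_le_left)
    (hTD.filter_mono inf_le_right)

lemma eventuallyConst_or_neg_ae_eq_compl
    (hneg : (∀ᵐ x ∂m1, x ∈ Ioo (-1) 0 → x ∈ D) ∨ ∀ᵐ x ∂m1, x ∈ Ioo (-1) 0 → x ∉ D)
    (hpos : (∀ᵐ x ∂m1, x ∈ Ioo 0 1 → x ∈ D) ∨ ∀ᵐ x ∂m1, x ∈ Ioo 0 1 → x ∉ D) :
    EventuallyConst D (ae m1) ∨ (-D : Set ℝ) =ᵐ[m1] (Dᶜ : Set ℝ) := by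
  have hne : ∀ᵐ x ∂m1, x ≠ 0 := Measure.ae_smul_measure (Measure.ae_ne _ 0) _
  simp only [eventuallyConst_set, eventuallyEq_set, Set.mem_neg, mem_compl_iff, mem_Ioo]
    at hneg hpos ⊢
  rcases hneg with hneg | hneg <;> rcases hpos with hpos | hpos
  · refine .inl (.inl ?_)
    filter_upwards [hneg, hpos, hne, ae_m1_mem_Ioo] with x
    grind
  · refine .inr ?_
    filter_upwards [hneg, hpos, ae_neg_m1_iff.2 hneg, ae_neg_m1_iff.2 hpos, hne,
      ae_m1_mem_Ioo] with x
    grind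
  · refine .inr ?_
    filter_upwards [hneg, hpos, ae_neg_m1_iff.2 hneg, ae_neg_m1_iff.2 hpos, hne,
      ae_m1_mem_Ioo] with x
    grind
  · refine .inl (.inr ?_)
    filter_upwards [hneg, hpos, hne, ae_m1_mem_Ioo] with x
    grind

lemma eventuallyConst_or_neg_ae_eq_compl_of_frequently_chordSlice_ae_eq (hγ : Real.sin γ ≠ 0)
    (h𝒞 : 𝒞.Finite) (h𝒞m : ∀ C ∈ 𝒞, MeasurableSet C) (hP : MeasurableSet P)
    (h : ∀ᵐ u ∂chordMeasure γ, ∃ C ∈ 𝒞, chordSlice γ (Prod.swap ⁻¹' P) u =ᵐ[m1] C)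
    (hD : MeasurableSet D) (hPD : ∃ᵐ v ∂chordMeasure γ, chordSlice γ P v =ᵐ[m1] D) :
    EventuallyConst D (ae m1) ∨ (Real.cos γ = 0 ∧ (-D : Set ℝ) =ᵐ[m1] (Dᶜ : Set ℝ)) := by
  have local_const {s : Set ℝ} (hs : s ⊆ Ioo (-1) 1) (hsγ : ∀ c ∈ s, c ≠ 0 ∨ Real.cos γ ≠ 0)
      (hconn : IsPreconnected s) :
      (∀ᵐ x ∂m1, x ∈ s → x ∈ D) ∨ ∀ᵐ x ∂m1, x ∈ s → x ∉ D :=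
    ae_mem_or_ae_notMem_of_isPreconnected hconn (hs.trans Ioo_subset_support_m1) fun c hc =>
      eventually_mem_or_eventually_notMem_of_frequently_chordSlice_ae_eq hγ h𝒞 h𝒞m hP h hD hPD
        (hs hc) (hsγ c hc)
  by_cases hcos : Real.cos γ = 0
  · refine (eventuallyConst_or_neg_ae_eq_compl (local_const ?_ ?_ isPreconnected_Ioo)
      (local_const ?_ ?_ isPreconnected_Ioo)).imp_right fun h => ⟨hcos, h⟩
    all_goals grind
  · refine .inl (eventuallyConst_set.2 ?_)
    refine (local_const subset_rfl (fun c _ => .inr hcos) isPreconnected_Ioo).imp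
      (fun h => ?_) fun h => ?_ <;>
    filter_upwards [h, ae_m1_mem_Ioo] with x hx hx' using hx hx'

end Regularity

section InvariantPairs

variable {γ : ℝ} {q : Kernel ℝ ℝ} {P N : Set (ℝ × ℝ)}

/-- The invariance of a subset of `E*` under `Q`, in terms of its sections `P` at `s = -1` and `N`
at `s = 1`: a step of `q` leads from `-[P]_v` into `[N]_v`, and from `-[N]^u` into `[P]^u`. The
minus signs come from the reflection in `q̂`. -/
def IsInvariantPair (γ : ℝ) (q : Kernel ℝ ℝ) (P N : Set (ℝ × ℝ)) : Prop :=
  (∀ᵐ v ∂chordMeasure γ, LeadsTo m1 q (-chordSlice γ P v) (chordSlice γ N v)) ∧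
    ∀ᵐ u ∂chordMeasure γ,
      LeadsTo m1 q (-chordSlice γ (Prod.swap ⁻¹' N) u) (chordSlice γ (Prod.swap ⁻¹' P) u)

lemma IsInvariantPair.swap (h : IsInvariantPair γ q P N) :
    IsInvariantPair γ q (Prod.swap ⁻¹' N) (Prod.swap ⁻¹' P) :=
  ⟨h.2, h.1⟩

lemma ae_m1_chordSlice_le (hq : q.Invariant m1) (hP : MeasurableSet P) (hN : MeasurableSet N)
    (h : ∀ᵐ v ∂chordMeasure γ, LeadsTo m1 q (-chordSlice γ P v) (chordSlice γ N v)) :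
    ∀ᵐ v ∂chordMeasure γ, m1 (chordSlice γ P v) ≤ m1 (chordSlice γ N v) := by
  filter_upwards [h] with v hv
  have hPv := measurableSet_chordSlice (γ := γ) hP v
  exact (m1_neg hPv).symm.trans_le (hv.measure_le hq hPv.neg (measurableSet_chordSlice hN v))

lemma volume_Eset_le (hq : q.Invariant m1) (hP : MeasurableSet P) (hN : MeasurableSet N)
    (h : ∀ᵐ v ∂chordMeasure γ, LeadsTo m1 q (-chordSlice γ P v) (chordSlice γ N v)) :
    volume.restrict (Eset γ) P ≤ volume.restrict (Eset γ) N := by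
  rw [← lintegral_m1_chordSlice hP, ← lintegral_m1_chordSlice hN]
  exact lintegral_mono_ae (ae_m1_chordSlice_le hq hP hN h)

lemma ae_isCyclicPair_chordSlice [IsMarkovKernel q] (hγ : Real.sin γ ≠ 0) (hq : q.IsReversible m1)
    (hP : MeasurableSet P) (hN : MeasurableSet N)
    (h : ∀ᵐ v ∂chordMeasure γ, LeadsTo m1 q (-chordSlice γ P v) (chordSlice γ N v))
    (hNP : volume.restrict (Eset γ) N ≤ volume.restrict (Eset γ) P) :
    ∀ᵐ v ∂chordMeasure γ, IsCyclicPair m1 q (-chordSlice γ P v) (chordSlice γ N v) := by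
  have finite : ∫⁻ v, m1 (chordSlice γ P v) ∂chordMeasure γ ≠ ∞ := by
    rw [lintegral_m1_chordSlice hP]
    exact ((measure_mono (subset_univ P)).trans_lt
      (by simpa using (volume_Eset_ne_top hγ).lt_top)).ne
  have measure_eq := ae_eq_of_ae_le_of_lintegral_le (ae_m1_chordSlice_le hq.invariant hP hN h)
    finite (measurable_m1_chordSlice hN).aemeasurable
    (by rwa [lintegral_m1_chordSlice hP, lintegral_m1_chordSlice hN])
  filter_upwards [h, measure_eq] with v hv hv_eq
  have hPv := measurableSet_chordSlice (γ := γ) hP v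
  exact hv.isCyclicPair hq hPv.neg (measurableSet_chordSlice hN v)
    ((m1_neg hPv).trans hv_eq).ge

lemma IsInvariantPair.ae_isCyclicPair [IsMarkovKernel q] (hγ : Real.sin γ ≠ 0)
    (hq : q.IsReversible m1) (hP : MeasurableSet P) (hN : MeasurableSet N)
    (h : IsInvariantPair γ q P N) :
    ∀ᵐ v ∂chordMeasure γ, IsCyclicPair m1 q (-chordSlice γ P v) (chordSlice γ N v) := by
  refine ae_isCyclicPair_chordSlice hγ hq hP hN h.1 ?_
  rw [← (measurePreserving_swap_Eset γ).measure_preimage hP.nullMeasurableSet,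
    ← (measurePreserving_swap_Eset γ).measure_preimage hN.nullMeasurableSet]
  exact volume_Eset_le hq.invariant (measurable_swap hN) (measurable_swap hP) h.2

lemma neg_ae_eq_of_eventuallyConst {A : Set ℝ} (hA : EventuallyConst A (ae m1)) :
    (-A : Set ℝ) =ᵐ[m1] A := by
  rcases eventuallyConst_set'.1 hA with h | h
  · exact (by simpa using ae_eq_neg_m1 h : (-A : Set ℝ) =ᵐ[m1] (∅ : Set ℝ)).trans h.symm
  · exact (by simpa using ae_eq_neg_m1 h : (-A : Set ℝ) =ᵐ[m1] univ).trans h.symm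

lemma ae_eventuallyConst_of_ae_eq {𝒞 : Set (Set ℝ)} {D : Set ℝ} (hγ : Real.sin γ ≠ 0)
    (h𝒞 : 𝒞.Finite) (h𝒞m : ∀ C ∈ 𝒞, MeasurableSet C) (hP : MeasurableSet P)
    (h : ∀ᵐ u ∂chordMeasure γ, ∃ C ∈ 𝒞, chordSlice γ (Prod.swap ⁻¹' P) u =ᵐ[m1] C)
    (hD : MeasurableSet D) (hDγ : ¬ (Real.cos γ = 0 ∧ (-D : Set ℝ) =ᵐ[m1] (Dᶜ : Set ℝ))) :
    ∀ᵐ v ∂chordMeasure γ, chordSlice γ P v =ᵐ[m1] D →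
      EventuallyConst (chordSlice γ P v) (ae m1) := by
  by_cases hPD : ∃ᵐ v ∂chordMeasure γ, chordSlice γ P v =ᵐ[m1] D
  · have hconst := (eventuallyConst_or_neg_ae_eq_compl_of_frequently_chordSlice_ae_eq hγ h𝒞 h𝒞m hP
      h hD hPD).resolve_right hDγ
    exact ae_of_all _ fun v hv => hconst.congr hv.symm
  · filter_upwards [not_frequently.1 hPD] with v hv hvD using absurd hvD hv

lemma ae_eq_neg_of_neg_ae_eq {A B : Set ℝ} (h : (-A : Set ℝ) =ᵐ[m1] B) :
    A =ᵐ[m1] (-B : Set ℝ) := by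
  simpa using ae_eq_neg_m1 h

lemma IsInvariantPair.exists_ae_chordSlice_ae_eq [IsMarkovKernel q] (hγ : Real.sin γ ≠ 0)
    (hq : q.IsReversible m1) (herg : KErgodicMeasure m1 q) (hP : MeasurableSet P)
    (hN : MeasurableSet N) (h : IsInvariantPair γ q P N) : ∃ C, MeasurableSet C ∧
      (∀ᵐ v ∂chordMeasure γ, EventuallyConst (chordSlice γ P v) (ae m1) ∨
        (chordSlice γ P v =ᵐ[m1] (-C : Set ℝ) ∧ chordSlice γ N v =ᵐ[m1] (Cᶜ : Set ℝ)) ∨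
        (chordSlice γ P v =ᵐ[m1] (-Cᶜ : Set ℝ) ∧ chordSlice γ N v =ᵐ[m1] C)) ∧
      ∀ᵐ u ∂chordMeasure γ, ∃ D ∈ ({∅, univ, C, Cᶜ} : Set (Set ℝ)),
        chordSlice γ (Prod.swap ⁻¹' P) u =ᵐ[m1] D := by
  obtain ⟨C, hC, hcyc⟩ := exists_forall_isCyclicPair herg
  have const_of_neg {A : Set ℝ} (hA : EventuallyConst (-A) (ae m1)) :
      EventuallyConst A (ae m1) := by
    simpa using hA.congr (neg_ae_eq_of_eventuallyConst hA).symm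
  refine ⟨C, hC, ?_, ?_⟩
  · filter_upwards [h.ae_isCyclicPair hγ hq hP hN] with v hv
    exact (hcyc _ _ (measurableSet_chordSlice hP v).neg (measurableSet_chordSlice hN v) hv).imp
      const_of_neg (.imp (.imp_left ae_eq_neg_of_neg_ae_eq) (.imp_left ae_eq_neg_of_neg_ae_eq))
  · filter_upwards [h.swap.ae_isCyclicPair hγ hq (measurable_swap hN) (measurable_swap hP)]
      with u hu
    rcases hcyc _ _ (measurableSet_chordSlice (measurable_swap hP) u)
      (measurableSet_chordSlice (measurable_swap hN) u).neg (And.symm hu) with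
      hconst | ⟨hC_u, -⟩ | ⟨hC_u, -⟩
    · rcases eventuallyConst_set'.1 hconst with h0 | h1
      · exact ⟨∅, by simp, h0⟩
      · exact ⟨univ, by simp, h1⟩
    · exact ⟨C, by simp, hC_u⟩
    · exact ⟨Cᶜ, by simp, hC_u⟩

lemma IsInvariantPair.ae_eventuallyConst_or_cos_eq_zero [IsMarkovKernel q] (hγ : Real.sin γ ≠ 0)
    (hq : q.IsReversible m1) (herg : KErgodicMeasure m1 q) (hP : MeasurableSet P)
    (hN : MeasurableSet N) (h : IsInvariantPair γ q P N) :
    (∀ᵐ v ∂chordMeasure γ, EventuallyConst (chordSlice γ P v) (ae m1)) ∨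
      Real.cos γ = 0 ∧ ∀ᵐ v ∂chordMeasure γ,
        EventuallyConst (chordSlice γ P v) (ae m1) ∨ chordSlice γ P v =ᵐ[m1] chordSlice γ N v := by
  obtain ⟨C, hC, slices_P, slices_swap⟩ := h.exists_ae_chordSlice_ae_eq hγ hq herg hP hN
  by_cases hCγ : Real.cos γ = 0 ∧ (-C : Set ℝ) =ᵐ[m1] (Cᶜ : Set ℝ)
  · refine .inr ⟨hCγ.1, slices_P.mono fun v hv => hv.imp_right ?_⟩
    rintro (⟨hPv, hNv⟩ | ⟨hPv, hNv⟩)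
    · exact hPv.trans (hCγ.2.trans hNv.symm)
    · exact hPv.trans ((ae_eq_neg_of_neg_ae_eq hCγ.2).symm.trans hNv.symm)
  · have const_of_ae_eq {D : Set ℝ} := ae_eventuallyConst_of_ae_eq (D := D) hγ (Set.toFinite _)
      (by simp [hC]) hP slices_swap
    refine .inl ?_
    filter_upwards [slices_P,
      const_of_ae_eq hC.neg fun hD => hCγ ⟨hD.1, by simpa using hD.2.compl.symm⟩,
      const_of_ae_eq hC.compl.neg fun hD => hCγ ⟨hD.1, by simpa using hD.2.symm⟩]
      with v hv const_of_neg const_of_neg_compl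
    exact hv.elim id (Or.elim · (const_of_neg ·.1) (const_of_neg_compl ·.1))

lemma IsInvariantPair.ae_eq [IsMarkovKernel q] (hγ : Real.sin γ ≠ 0)
    (hq : q.IsReversible m1) (herg : KErgodicMeasure m1 q) (hP : MeasurableSet P)
    (hN : MeasurableSet N) (h : IsInvariantPair γ q P N) :
    P =ᵐ[volume.restrict (Eset γ)] N := by
  have const_or_ae_eq : ∀ᵐ v ∂chordMeasure γ,
      EventuallyConst (chordSlice γ P v) (ae m1) ∨ chordSlice γ P v =ᵐ[m1] chordSlice γ N v :=
    (h.ae_eventuallyConst_or_cos_eq_zero hγ hq herg hP hN).elim (·.mono fun _ => .inl) (·.2)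
  rw [ae_eq_restrict_Eset_iff hP hN]
  filter_upwards [const_or_ae_eq, h.ae_isCyclicPair hγ hq hP hN] with v hconst hcyc
  refine hconst.elim (fun hPv => ?_) id
  have neg_eq := neg_ae_eq_of_eventuallyConst hPv
  exact neg_eq.symm.trans (hcyc.ae_eq_of_eventuallyConst hq.invariant
    (measurableSet_chordSlice hP v).neg (measurableSet_chordSlice hN v)
    (hPv.congr neg_eq.symm)).symm

lemma IsInvariantPair.preimage_chordReflect_ae_eq_or [IsMarkovKernel q] (hγ : Real.sin γ ≠ 0)
    (hq : q.IsReversible m1) (herg : KErgodicMeasure m1 q) (hP : MeasurableSet P)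
    (hN : MeasurableSet N) (h : IsInvariantPair γ q P N) :
    chordReflect γ ⁻¹' P =ᵐ[volume.restrict (Eset γ)] P ∨ Real.cos γ = 0 := by
  refine (h.ae_eventuallyConst_or_cos_eq_zero hγ hq herg hP hN).imp (fun hconst => ?_) And.left
  refine (ae_eq_restrict_Eset_iff (measurable_chordReflect γ hP) hP).2 ?_
  filter_upwards [hconst] with v hv
  rw [chordSlice_preimage_chordReflect]
  exact neg_ae_eq_of_eventuallyConst hv

lemma ae_chordSlice_swap_ae_eq (hP : MeasurableSet P) (hN : MeasurableSet N)
    (h : P =ᵐ[volume.restrict (Eset γ)] N) : ∀ᵐ u ∂chordMeasure γ,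
      chordSlice γ (Prod.swap ⁻¹' P) u =ᵐ[m1] chordSlice γ (Prod.swap ⁻¹' N) u :=
  (ae_eq_restrict_Eset_iff (measurable_swap hP) (measurable_swap hN)).1
    ((measurePreserving_swap_Eset γ).quasiMeasurePreserving.preimage_ae_eq h)

lemma IsInvariantPair.preimage_chordReflect [IsMarkovKernel q] (hγ : Real.sin γ ≠ 0)
    (hq : q.IsReversible m1) (herg : KErgodicMeasure m1 q) (hP : MeasurableSet P)
    (hN : MeasurableSet N) (h : IsInvariantPair γ q P N) :
    IsInvariantPair γ q (chordReflect γ ⁻¹' N) (chordReflect γ ⁻¹' P) := by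
  have hPN := h.ae_eq hγ hq herg hP hN
  have reflect_PN : chordReflect γ ⁻¹' P =ᵐ[volume.restrict (Eset γ)] chordReflect γ ⁻¹' N :=
    (measurePreserving_chordReflect_Eset γ).quasiMeasurePreserving.preimage_ae_eq hPN
  have slice_PN := ae_chordSlice_swap_ae_eq hP hN hPN
  constructor
  · filter_upwards [h.ae_isCyclicPair hγ hq hP hN] with v hv
    simpa only [chordSlice_preimage_chordReflect, neg_neg] using hv.2
  rcases h.preimage_chordReflect_ae_eq_or hγ hq herg hP hN with hRP | hcos
  · filter_upwards [h.2, slice_PN, ae_chordSlice_swap_ae_eq (measurable_chordReflect γ hP) hP hRP,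
      ae_chordSlice_swap_ae_eq (measurable_chordReflect γ hN) hP (reflect_PN.symm.trans hRP)]
      with u hu hPN_u hRP_u hRN_u
    exact hu.congr hq.invariant (ae_eq_neg_m1 (hPN_u.symm.trans hRP_u.symm)) hRN_u.symm
  · simp only [chordSlice_swap_preimage_chordReflect hcos]
    filter_upwards [(measurePreserving_neg_chordMeasure γ).quasiMeasurePreserving.ae h.2,
      (measurePreserving_neg_chordMeasure γ).quasiMeasurePreserving.ae slice_PN] with u hu hPN_u
    exact hu.congr hq.invariant (ae_eq_neg_m1 hPN_u.symm) hPN_u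

end InvariantPairs

section Sheets

variable {γ : ℝ} {q : Kernel ℝ ℝ} {P N : Set (ℝ × ℝ)} {F : Set (ℝ × ℝ × ℝ)}

/-- The embedding of `ℝ²` as the copy `ℝ² × {s}`; the sets `Fplus F` and `Fminus F` are the
preimages of `F` under `sheet 1` and `sheet (-1)`. -/
def sheet (s : ℝ) (z : ℝ × ℝ) : ℝ × ℝ × ℝ := (z.1, z.2, s)

lemma measurableEmbedding_sheet (s : ℝ) : MeasurableEmbedding (sheet s) :=
  MeasurableEquiv.prodAssoc.measurableEmbedding.comp (measurableEmbedding_prod_mk_right s)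

lemma m2_eq_smul_add_map_sheet (γ : ℝ) : m2 γ = ((volume (Eset γ))⁻¹ * 2⁻¹) •
    ((volume.restrict (Eset γ)).map (sheet 1) +
      (volume.restrict (Eset γ)).map (sheet (-1))) := by
  have hm : Measurable fun p : (ℝ × ℝ) × ℝ => (p.1.1, p.1.2, p.2) := by fun_prop
  rw [m2, Measure.prod_smul_left, Measure.prod_smul_right, Measure.prod_add, Measure.prod_dirac,
    Measure.prod_dirac, smul_smul, Measure.map_smul, Measure.map_add _ _ hm,
    Measure.map_map hm (by fun_prop), Measure.map_map hm (by fun_prop)]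
  rfl

lemma ae_m2_iff (hγ : Real.sin γ ≠ 0) {p : ℝ × ℝ × ℝ → Prop} :
    (∀ᵐ w ∂m2 γ, p w) ↔ (∀ᵐ z ∂volume.restrict (Eset γ), p (z.1, z.2, 1)) ∧
      ∀ᵐ z ∂volume.restrict (Eset γ), p (z.1, z.2, -1) := by
  rw [m2_eq_smul_add_map_sheet, Measure.ae_ennreal_smul_measure_iff
      (mul_ne_zero (ENNReal.inv_ne_zero.2 (volume_Eset_ne_top hγ)) (by simp)),
    ae_add_measure_iff, (measurableEmbedding_sheet 1).ae_map_iff,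
    (measurableEmbedding_sheet (-1)).ae_map_iff]
  rfl

lemma measurePreserving_m2_of_comp_sheet {T : ℝ × ℝ × ℝ → ℝ × ℝ × ℝ} {R : ℝ × ℝ → ℝ × ℝ}
    (hT : Measurable T)
    (hR : MeasurePreserving R (volume.restrict (Eset γ)) (volume.restrict (Eset γ)))
    (hTR : ∀ s, T ∘ sheet s = sheet (-s) ∘ R) : MeasurePreserving T (m2 γ) (m2 γ) := by
  have map_sheet (s : ℝ) : ((volume.restrict (Eset γ)).map (sheet s)).map T =
      (volume.restrict (Eset γ)).map (sheet (-s)) := by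
    rw [Measure.map_map hT (measurableEmbedding_sheet s).measurable, hTR,
      ← Measure.map_map (measurableEmbedding_sheet (-s)).measurable hR.measurable, hR.map_eq]
  refine ⟨hT, ?_⟩
  rw [m2_eq_smul_add_map_sheet, Measure.map_smul, Measure.map_add _ _ hT, map_sheet, map_sheet,
    neg_neg, add_comm]

lemma measurableSet_Fplus (hF : MeasurableSet F) : MeasurableSet (Fplus F) :=
  (measurableEmbedding_sheet 1).measurable hF

lemma measurableSet_Fminus (hF : MeasurableSet F) : MeasurableSet (Fminus F) :=
  (measurableEmbedding_sheet (-1)).measurable hF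

lemma measurable_kernel_chordSlice [IsSFiniteKernel q] (hN : MeasurableSet N) :
    Measurable fun z : ℝ × ℝ => q (-ellInv γ z.2 z.1) (chordSlice γ N z.2) := by
  have coord : Measurable fun z : ℝ × ℝ => -ellInv γ z.2 z.1 :=
    ((measurable_ellInv γ).comp measurable_swap).neg
  have chart : Measurable fun p : (ℝ × ℝ) × ℝ => chordChart γ (p.1.2, p.2) :=
    (measurable_chordChart γ).comp (by fun_prop)
  exact Kernel.measurable_kernel_prodMk_left (κ := q.comap _ coord) (chart hN)

lemma ae_restrict_Eset_kernel_chordSlice_iff [IsSFiniteKernel q] (hP : MeasurableSet P)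
    (hN : MeasurableSet N) :
    (∀ᵐ z ∂volume.restrict (Eset γ), z ∈ P →
        q (-ellInv γ z.2 z.1) (chordSlice γ N z.2) = 1) ↔
      ∀ᵐ v ∂chordMeasure γ, LeadsTo m1 q (-chordSlice γ P v) (chordSlice γ N v) := by
  have hmeas : MeasurableSet
      {z : ℝ × ℝ | z ∈ P → q (-ellInv γ z.2 z.1) (chordSlice γ N z.2) = 1} :=
    hP.imp (measurable_kernel_chordSlice hN (measurableSet_singleton 1))
  rw [ae_restrict_Eset_iff hmeas]
  refine eventually_congr ((ae_chordMeasure_pos γ).mono fun v hv => ?_)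
  simp only [LeadsTo, ellInv_ellMap hv]
  rw [← ae_neg_m1_iff]
  simp [chordSlice]

lemma Qfun_neg_one_apply (hF : MeasurableSet F) (z : ℝ × ℝ) :
    Qfun γ q (z.1, z.2, -1) F = q (-ellInv γ z.2 z.1) (chordSlice γ (Fplus F) z.2) := by
  simp only [Qfun, if_true]
  rw [Measure.map_apply (by fun_prop) hF]
  rfl

lemma Qfun_one_apply (hF : MeasurableSet F) (z : ℝ × ℝ) : Qfun γ q (z.1, z.2, 1) F =
    q (-ellInv γ z.1 z.2) (chordSlice γ (Prod.swap ⁻¹' Fminus F) z.1) := by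
  simp only [Qfun, if_neg (by norm_num : (1 : ℝ) ≠ -1)]
  rw [Measure.map_apply (by fun_prop) hF]
  rfl

lemma ae_swap_restrict_Eset_iff {p : ℝ × ℝ → Prop} :
    (∀ᵐ z ∂volume.restrict (Eset γ), p z.swap) ↔ ∀ᵐ z ∂volume.restrict (Eset γ), p z :=
  ⟨fun h => by simpa using (measurePreserving_swap_Eset γ).quasiMeasurePreserving.ae h,
    fun h => (measurePreserving_swap_Eset γ).quasiMeasurePreserving.ae h⟩

lemma kInvariantSet_m2_iff [IsSFiniteKernel q] (hγ : Real.sin γ ≠ 0) (hF : MeasurableSet F) :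
    KInvariantSet (m2 γ) (Qfun γ q) F ↔ IsInvariantPair γ q (Fminus F) (Fplus F) := by
  have hplus := measurableSet_Fplus hF
  have hminus := measurableSet_Fminus hF
  rw [KInvariantSet, ae_m2_iff hγ, and_comm, IsInvariantPair,
    ← ae_restrict_Eset_kernel_chordSlice_iff hminus hplus,
    ← ae_restrict_Eset_kernel_chordSlice_iff (measurable_swap hplus) (measurable_swap hminus),
    ← ae_swap_restrict_Eset_iff (p := fun z => z ∈ Prod.swap ⁻¹' Fplus F → _)]
  simp only [Qfun_neg_one_apply hF, Qfun_one_apply hF]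
  rfl

end Sheets

section Reflections

variable {X : Type*} [MeasurableSpace X] {μ : Measure X} {p : X → Measure X} {T : X → X}

lemma KErgodicSet.image_of_involutive {A : Set X} (hA : KErgodicSet μ p A)
    (hinv : Function.Involutive T) (hT : MeasurePreserving T μ μ)
    (hTp : ∀ B, MeasurableSet B → KInvariantSet μ p B → KInvariantSet μ p (T ⁻¹' B)) :
    KErgodicSet μ p (T '' A) := by
  obtain ⟨hAm, hAp, hA_min⟩ := hA
  rw [image_eq_preimage_of_inverse hinv.leftInverse hinv.rightInverse]
  refine ⟨hT.measurable hAm, hTp A hAm hAp, fun B hBA hB hBp => ?_⟩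
  rw [hT.measure_preimage hAm.nullMeasurableSet, ← hT.measure_preimage hB.nullMeasurableSet]
  refine hA_min _ (fun x hx => ?_) (hT.measurable hB) (hTp B hB hBp)
  simpa only [mem_preimage, hinv x] using hBA hx

variable {γ : ℝ} {q : Kernel ℝ ℝ} {F : Set (ℝ × ℝ × ℝ)}

lemma involutive_T0 (γ : ℝ) : Function.Involutive (T0 γ) := by
  intro w
  simp [T0]

lemma involutive_T1 (γ : ℝ) : Function.Involutive (T1 γ) := by
  intro w
  simp [T1]

lemma measurePreserving_T0 (γ : ℝ) : MeasurePreserving (T0 γ) (m2 γ) (m2 γ) :=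
  measurePreserving_m2_of_comp_sheet (by unfold T0; fun_prop)
    (measurePreserving_chordReflect_Eset γ) fun _ => rfl

lemma measurePreserving_T1 (γ : ℝ) : MeasurePreserving (T1 γ) (m2 γ) (m2 γ) :=
  measurePreserving_m2_of_comp_sheet (by unfold T1; fun_prop)
    ((measurePreserving_swap_Eset γ).comp
      ((measurePreserving_chordReflect_Eset γ).comp (measurePreserving_swap_Eset γ)))
    fun _ => rfl

lemma Fplus_preimage_T0 (γ : ℝ) (F : Set (ℝ × ℝ × ℝ)) :
    Fplus (T0 γ ⁻¹' F) = chordReflect γ ⁻¹' Fminus F :=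
  rfl

lemma Fminus_preimage_T0 (γ : ℝ) (F : Set (ℝ × ℝ × ℝ)) :
    Fminus (T0 γ ⁻¹' F) = chordReflect γ ⁻¹' Fplus F := by
  ext z
  simp [Fminus, Fplus, T0, chordReflect]

lemma Fplus_preimage_T1 (γ : ℝ) (F : Set (ℝ × ℝ × ℝ)) :
    Fplus (T1 γ ⁻¹' F) = Prod.swap ⁻¹' (chordReflect γ ⁻¹' (Prod.swap ⁻¹' Fminus F)) :=
  rfl

lemma Fminus_preimage_T1 (γ : ℝ) (F : Set (ℝ × ℝ × ℝ)) :
    Fminus (T1 γ ⁻¹' F) = Prod.swap ⁻¹' (chordReflect γ ⁻¹' (Prod.swap ⁻¹' Fplus F)) := by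
  ext z
  simp [Fminus, Fplus, T1, chordReflect]

lemma KInvariantSet.preimage_T0 [IsMarkovKernel q] (hγ : Real.sin γ ≠ 0)
    (hq : q.IsReversible m1) (herg : KErgodicMeasure m1 q) (hF : MeasurableSet F)
    (h : KInvariantSet (m2 γ) (Qfun γ q) F) :
    KInvariantSet (m2 γ) (Qfun γ q) (T0 γ ⁻¹' F) := by
  rw [kInvariantSet_m2_iff hγ hF] at h
  rw [kInvariantSet_m2_iff hγ ((measurePreserving_T0 γ).measurable hF), Fminus_preimage_T0,
    Fplus_preimage_T0]
  exact h.preimage_chordReflect hγ hq herg (measurableSet_Fminus hF) (measurableSet_Fplus hF)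

lemma KInvariantSet.preimage_T1 [IsMarkovKernel q] (hγ : Real.sin γ ≠ 0)
    (hq : q.IsReversible m1) (herg : KErgodicMeasure m1 q) (hF : MeasurableSet F)
    (h : KInvariantSet (m2 γ) (Qfun γ q) F) :
    KInvariantSet (m2 γ) (Qfun γ q) (T1 γ ⁻¹' F) := by
  rw [kInvariantSet_m2_iff hγ hF] at h
  rw [kInvariantSet_m2_iff hγ ((measurePreserving_T1 γ).measurable hF), Fminus_preimage_T1,
    Fplus_preimage_T1]
  exact (h.swap.preimage_chordReflect hγ hq herg (measurable_swap (measurableSet_Fplus hF))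
    (measurable_swap (measurableSet_Fminus hF))).swap

end Reflections

/-- images of `(m²,Q)`-ergodic sets under `T₀` and `T₁` are `(m²,Q)`-ergodic. -/
theorem ergodic_sets_preserved (γ : ℝ) (hγ : γ ∈ Ioo 0 Real.pi)
    (q : Kernel ℝ ℝ) (hq : IsMarkovOnInterval q)
    (hrev : Reversible1 q)
    (herg : KErgodicMeasure m1 (fun x => q x))
    (F : Set (ℝ × ℝ × ℝ)) (hFsub : F ⊆ EstarSet γ)
    (hF : KErgodicSet (m2 γ) (Qfun γ q) F) :
    KErgodicSet (m2 γ) (Qfun γ q) (T0 γ '' F) ∧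
    KErgodicSet (m2 γ) (Qfun γ q) (T1 γ '' F) := by
  have : IsMarkovKernel q := hq.1
  have sin_ne_zero : Real.sin γ ≠ 0 := (Real.sin_pos_of_mem_Ioo hγ).ne'
  constructor
  · exact hF.image_of_involutive (involutive_T0 γ) (measurePreserving_T0 γ)
      fun _ hB h => h.preimage_T0 sin_ne_zero hrev.isReversible herg hB
  · exact hF.image_of_involutive (involutive_T1 γ) (measurePreserving_T1 γ)
      fun _ hB h => h.preimage_T1 sin_ne_zero hrev.isReversible herg hB
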